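/- arXiv:1905.02387 — 4 statements merged into one kernel-verified Lean document; each statement's English description precedes it below -/
import Mathlib

section
/- For every king permutation π of length n ≥ 4, either [2413] ⪯ π or [3142] ⪯ π. -/
open Equiv

/-- The Manhattan distance between two elements of `Fin n`. -/
def fdist {n : ℕ} (a b : Fin n) : ℕ := ((a : ℤ) - (b : ℤ)).natAbs

/-- A king permutation: no two adjacent positions carry adjacent values. -/
def IsKing {n : ℕ} (σ : Equiv.Perm (Fin n)) : Prop :=
  ∀ i j : Fin n, (j : ℕ) = (i : ℕ) + 1 → fdist (σ i) (σ j) ≠ 1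

/-- Pattern containment `π ⪯ σ`. -/
def Contains {m n : ℕ} (π : Equiv.Perm (Fin m)) (σ : Equiv.Perm (Fin n)) : Prop :=
  ∃ f : Fin m ↪o Fin n, ∀ a b : Fin m, π a < π b ↔ σ (f a) < σ (f b)

/-- Strict pattern containment `π ≺ σ`. -/
def StrictContains {m n : ℕ} (π : Equiv.Perm (Fin m)) (σ : Equiv.Perm (Fin n)) : Prop :=
  Contains π σ ∧ m < n

/-- `nabla σ i` deletes the `i`-th entry of `σ` and standardizes. -/
def nabla {n : ℕ} (σ : Equiv.Perm (Fin (n + 1))) (i : Fin (n + 1)) : Equiv.Perm (Fin n) :=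
  Equiv.removeNone ((finSuccEquiv' i).symm.trans (σ.trans (finSuccEquiv' (σ i))))

/-- `nablaStar σ a` deletes the value `a` from `σ` and standardizes. -/
def nablaStar {n : ℕ} (σ : Equiv.Perm (Fin (n + 1))) (a : Fin (n + 1)) : Equiv.Perm (Fin n) :=
  nabla σ (σ⁻¹ a)

/-- The permutation [2413] (0-based one-line notation [1,3,0,2]). -/
def p2413 : Equiv.Perm (Fin 4) :=
  ⟨![1, 3, 0, 2], ![2, 0, 3, 1], by intro x; fin_cases x <;> rfl, by intro x; fin_cases x <;> rfl⟩

/-- The permutation [3142] (0-based one-line notation [2,0,3,1]). -/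
def p3142 : Equiv.Perm (Fin 4) :=
  ⟨![2, 0, 3, 1], ![1, 3, 0, 2], by intro x; fin_cases x <;> rfl, by intro x; fin_cases x <;> rfl⟩

/-- `σ i` vertically separates `σ j` from `σ k`. -/
def VSep {n : ℕ} (σ : Equiv.Perm (Fin n)) (i j k : Fin n) : Prop :=
  i ≠ j ∧ i ≠ k ∧ j ≠ k ∧ fdist i j = 1 ∧ fdist i k = 1 ∧ fdist (σ j) (σ k) = 1

/-- `σ i` horizontally separates `σ j` from `σ k`. -/
def HSep {n : ℕ} (σ : Equiv.Perm (Fin n)) (i j k : Fin n) : Prop :=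
  i ≠ j ∧ i ≠ k ∧ j ≠ k ∧ fdist (σ i) (σ j) = 1 ∧ fdist (σ i) (σ k) = 1 ∧ fdist j k = 1

/-- `σ i` separates `σ j` from `σ k`. -/
def Separates {n : ℕ} (σ : Equiv.Perm (Fin n)) (i j k : Fin n) : Prop :=
  VSep σ i j k ∨ HSep σ i j k

/-- `π` has a 2-block at positions `j`, `j+1` (0-based). -/
def HasTwoBlockAt {n : ℕ} (π : Equiv.Perm (Fin n)) (j : ℕ) : Prop :=
  ∃ hj : j + 1 < n, fdist (π ⟨j, by omega⟩) (π ⟨j + 1, hj⟩) = 1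

/-- `π` has a 3-block at positions `p`, `p+1`, `p+2` (0-based). -/
def HasThreeBlockAt {n : ℕ} (π : Equiv.Perm (Fin n)) (p : ℕ) : Prop :=
  ∃ hp : p + 2 < n, ∃ m : ℕ,
    ({(π ⟨p, by omega⟩ : ℕ), (π ⟨p + 1, by omega⟩ : ℕ), (π ⟨p + 2, by omega⟩ : ℕ)} : Finset ℕ)
      = {m, m + 1, m + 2}

/-!
A permutation avoiding `2413` and `3142` is separable: every set of at least two of its points is a
direct sum or a skew sum of two smaller sets. To see this, remove the rightmost point `r`; up to
reversing the values, what remains is a direct sum `A ⊕ B`, and by induction `A ∪ {r}` is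
decomposable too. If `A ∪ {r} = X ⊕ Y`, the whole set is `X ⊕ (Y ∪ B)`. If `A ∪ {r} = X ⊖ Y`, then
either `r` lies below everything and splits off, or some `y ∈ A` below `r` gives with `x ∈ X` and
`b ∈ B` an occurrence `x, y, b, r` of `3142`. Decomposing again and again ends in two points that
are consecutive both in position and in value, which a king permutation does not have.
-/

open OrderDual

section LinearOrder

variable {α β : Type*} [LinearOrder α] [LinearOrder β] {f : α → β}

/-- The points of the graph of `f` over `a`, `b`, `c`, `d` form the pattern `2413`. Since reversing
the values turns `2413` into `3142`, occurrences of `3142` in `f` are encoded as `2413` occurrences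
in `toDual ∘ f`. -/
structure Is2413 (f : α → β) (a b c d : α) : Prop where
  lt_ab : a < b
  lt_bc : b < c
  lt_cd : c < d
  map_lt_ca : f c < f a
  map_lt_ad : f a < f d
  map_lt_db : f d < f b

/-- `f` is separable on `s`: its restriction to `s` avoids both `2413` and `3142`. -/
def SeparableOn (f : α → β) (s : Set α) : Prop :=
  ∀ a ∈ s, ∀ b ∈ s, ∀ c ∈ s, ∀ d ∈ s, ¬ Is2413 f a b c d ∧ ¬ Is2413 (toDual ∘ f) a b c d

/-- The graph of `f` over `A ∪ B` is the direct sum of two nonempty parts: the part over `B` lies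
strictly above and to the right of the part over `A`. A skew sum is a direct sum for
`toDual ∘ f`. -/
structure IsDirectSum (f : α → β) (A B : Finset α) : Prop where
  left_nonempty : A.Nonempty
  right_nonempty : B.Nonempty
  lt : ∀ a ∈ A, ∀ b ∈ B, a < b
  map_lt : ∀ a ∈ A, ∀ b ∈ B, f a < f b

/-- The graph of `f` over `s` is a direct sum or a skew sum of two nonempty parts. -/
def IsDecomposable (f : α → β) (s : Finset α) : Prop :=
  ∃ A B, A ∪ B = s ∧ (IsDirectSum f A B ∨ IsDirectSum (toDual ∘ f) A B)

/-- Some two points of the graph of `f` over `s` form a 2-block: no point of the graph over `s` lies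
strictly between them in position, and none lies strictly between them in value. -/
def HasTwoBlockOn (f : α → β) (s : Finset α) : Prop :=
  ∃ p ∈ s, ∃ q ∈ s, p < q ∧ ∀ r ∈ s, r ∉ Set.Ioo p q ∧ f r ∉ Set.uIoo (f p) (f q)

lemma SeparableOn.mono {s t : Set α} (h : SeparableOn f t) (hst : s ⊆ t) : SeparableOn f s :=
  fun a ha b hb c hc d hd => h a (hst ha) b (hst hb) c (hst hc) d (hst hd)

lemma SeparableOn.toDual {s : Set α} (h : SeparableOn f s) : SeparableOn (toDual ∘ f) s :=
  fun a ha b hb c hc d hd => (h a ha b hb c hc d hd).symm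

lemma isDecomposable_toDual_comp {s : Finset α} :
    IsDecomposable (toDual ∘ f) s ↔ IsDecomposable f s :=
  exists₂_congr fun _ _ => and_congr_right' or_comm

lemma hasTwoBlockOn_toDual_comp {s : Finset α} :
    HasTwoBlockOn (toDual ∘ f) s ↔ HasTwoBlockOn f s := by
  simp [HasTwoBlockOn, Set.uIoo_toDual]

lemma isDecomposable_pair {a b : α} (hab : a < b) (hf : f a ≠ f b) : IsDecomposable f {a, b} := by
  refine ⟨{a}, {b}, rfl, hf.lt_or_gt.imp (fun h => ?_) (fun h => ?_)⟩ <;>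
    exact ⟨by simp, by simp, by simpa using hab, by simpa using h⟩

namespace IsDirectSum

variable {A B X Y : Finset α} {r : α}

lemma mem_right_of_union_eq_insert (h : IsDirectSum f X Y) (hXY : X ∪ Y = insert r A)
    (hr : ∀ a ∈ A, a < r) : r ∈ Y := by
  obtain ⟨y, hy⟩ := h.right_nonempty
  have hyr : y ≤ r := by
    obtain rfl | hyA := Finset.mem_insert.1 (hXY ▸ Finset.mem_union_right X hy)
    exacts [le_rfl, (hr y hyA).le]
  have hr_mem : r ∈ X ∪ Y := hXY ▸ Finset.mem_insert_self r A
  exact (Finset.mem_union.1 hr_mem).resolve_left fun hrX => hyr.not_gt (h.lt r hrX y hy)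

lemma left_subset_of_union_eq_insert (h : IsDirectSum f X Y) (hXY : X ∪ Y = insert r A)
    (hr : ∀ a ∈ A, a < r) : X ⊆ A := by
  intro x hx
  have hxr : x < r := h.lt x hx r (h.mem_right_of_union_eq_insert hXY hr)
  exact Finset.mem_of_mem_insert_of_ne (hXY ▸ Finset.mem_union_left Y hx) hxr.ne

lemma union_right (hXY : IsDirectSum f X Y) (hAB : IsDirectSum f A B) (hXA : X ⊆ A) :
    IsDirectSum f X (Y ∪ B) where
  left_nonempty := hXY.left_nonempty
  right_nonempty := hXY.right_nonempty.inl
  lt x hx y hy := (Finset.mem_union.1 hy).elim (hXY.lt x hx y) (hAB.lt x (hXA hx) y)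
  map_lt x hx y hy := (Finset.mem_union.1 hy).elim (hXY.map_lt x hx y) (hAB.map_lt x (hXA hx) y)

lemma skew_singleton (hAB : IsDirectSum f A B) (hr : ∀ x ∈ A ∪ B, x < r)
    (hfr : ∀ a ∈ A, f r < f a) : IsDirectSum (toDual ∘ f) (A ∪ B) {r} where
  left_nonempty := hAB.left_nonempty.inl
  right_nonempty := Finset.singleton_nonempty r
  lt := by simpa using hr
  map_lt := by
    obtain ⟨a, ha⟩ := hAB.left_nonempty
    intro x hx z hz
    obtain rfl := Finset.mem_singleton.1 hz
    rcases Finset.mem_union.1 hx with hxA | hxB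
    exacts [hfr x hxA, (hfr a ha).trans (hAB.map_lt a ha x hxB)]

lemma map_lt_left_of_separableOn (hAB : IsDirectSum f A B) (hXY : IsDirectSum (toDual ∘ f) X Y)
    (hXYA : X ∪ Y = insert r A) (hr : ∀ x ∈ A ∪ B, x < r)
    (hsep : SeparableOn f (insert r (A ∪ B) : Finset α))
    (hinj : Set.InjOn f (insert r (A ∪ B) : Finset α)) :
    ∀ a ∈ A, f r < f a := by
  by_contra! ⟨y, hyA, hyr⟩
  have hrA : ∀ a ∈ A, a < r := fun a ha => hr a (Finset.mem_union_left B ha)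
  obtain ⟨x, hx⟩ := hXY.left_nonempty
  obtain ⟨b, hb⟩ := hAB.right_nonempty
  have hrY : r ∈ Y := hXY.mem_right_of_union_eq_insert hXYA hrA
  have hxA : x ∈ A := hXY.left_subset_of_union_eq_insert hXYA hrA hx
  have hrx : f r < f x := hXY.map_lt x hx r hrY
  have hyY : y ∈ Y :=
    (Finset.mem_union.1 (hXYA ▸ Finset.mem_insert_of_mem hyA)).resolve_left fun hyX =>
      hyr.not_gt (hXY.map_lt y hyX r hrY)
  have hyr' : f y < f r :=
    hyr.lt_of_ne fun h => (hrA y hyA).ne (hinj (by simp [hyA]) (by simp) h)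
  exact (hsep x (by simp [hxA]) y (by simp [hyA]) b (by simp [hb]) r (by simp)).2
    ⟨hXY.lt x hx y hyY, hAB.lt y hyA b hb, hr b (Finset.mem_union_right A hb),
      hAB.map_lt x hxA b hb, hrx, hyr'⟩

lemma isDecomposable_insert (hAB : IsDirectSum f A B) (hr : ∀ x ∈ A ∪ B, x < r)
    (hsep : SeparableOn f (insert r (A ∪ B) : Finset α))
    (hinj : Set.InjOn f (insert r (A ∪ B) : Finset α)) (hA : IsDecomposable f (insert r A)) :
    IsDecomposable f (insert r (A ∪ B)) := by
  obtain ⟨X, Y, hXYA, hXY | hXY⟩ := hA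
  · have hXA : X ⊆ A := hXY.left_subset_of_union_eq_insert hXYA
      fun a ha => hr a (Finset.mem_union_left B ha)
    refine ⟨X, Y ∪ B, ?_, .inl (hXY.union_right hAB hXA)⟩
    rw [← Finset.union_assoc, hXYA, Finset.insert_union]
  · have hfr : ∀ a ∈ A, f r < f a := hAB.map_lt_left_of_separableOn hXY hXYA hr hsep hinj
    exact ⟨A ∪ B, {r}, by rw [Finset.union_comm, Finset.insert_eq],
      .inr (hAB.skew_singleton hr hfr)⟩

lemma insert_left_ssubset (hAB : IsDirectSum f A B) (hr : ∀ x ∈ A ∪ B, x < r) :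
    insert r A ⊂ insert r (A ∪ B) := by
  obtain ⟨b, hb⟩ := hAB.right_nonempty
  refine (Finset.ssubset_iff_of_subset (Finset.insert_subset_insert r Finset.subset_union_left)).2
    ⟨b, by simp [hb], ?_⟩
  rw [Finset.mem_insert, not_or]
  exact ⟨(hr b (Finset.mem_union_right A hb)).ne, fun hbA => (hAB.lt b hbA b hb).false⟩

lemma left_ssubset (h : IsDirectSum f A B) : A ⊂ A ∪ B := by
  obtain ⟨b, hb⟩ := h.right_nonempty
  exact (Finset.ssubset_iff_of_subset Finset.subset_union_left).2
    ⟨b, Finset.mem_union_right A hb, fun hbA => (h.lt b hbA b hb).false⟩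

lemma right_ssubset (h : IsDirectSum f A B) : B ⊂ A ∪ B := by
  obtain ⟨a, ha⟩ := h.left_nonempty
  exact (Finset.ssubset_iff_of_subset Finset.subset_union_right).2
    ⟨a, Finset.mem_union_left B ha, fun haB => (h.lt a ha a haB).false⟩

lemma hasTwoBlockOn_of_left (h : IsDirectSum f A B) (hA : HasTwoBlockOn f A) :
    HasTwoBlockOn f (A ∪ B) := by
  obtain ⟨p, hp, q, hq, hpq, hblock⟩ := hA
  refine ⟨p, Finset.mem_union_left B hp, q, Finset.mem_union_left B hq, hpq, fun r hr => ?_⟩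
  rcases Finset.mem_union.1 hr with hrA | hrB
  · exact hblock r hrA
  · exact ⟨fun hpr => (h.lt q hq r hrB).not_gt hpr.2,
      fun hfr => (max_lt (h.map_lt p hp r hrB) (h.map_lt q hq r hrB)).not_gt hfr.2⟩

lemma hasTwoBlockOn_of_right (h : IsDirectSum f A B) (hB : HasTwoBlockOn f B) :
    HasTwoBlockOn f (A ∪ B) := by
  obtain ⟨p, hp, q, hq, hpq, hblock⟩ := hB
  refine ⟨p, Finset.mem_union_right A hp, q, Finset.mem_union_right A hq, hpq, fun r hr => ?_⟩
  rcases Finset.mem_union.1 hr with hrA | hrB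
  · exact ⟨fun hpr => (h.lt r hrA p hp).not_gt hpr.1,
      fun hfr => (lt_min (h.map_lt r hrA p hp) (h.map_lt r hrA q hq)).not_gt hfr.1⟩
  · exact hblock r hrB

lemma hasTwoBlockOn (h : IsDirectSum f A B) (hA : A.Nontrivial → HasTwoBlockOn f A)
    (hB : B.Nontrivial → HasTwoBlockOn f B) : HasTwoBlockOn f (A ∪ B) := by
  obtain ⟨a, rfl⟩ | hA' := h.left_nonempty.exists_eq_singleton_or_nontrivial
  · obtain ⟨b, rfl⟩ | hB' := h.right_nonempty.exists_eq_singleton_or_nontrivial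
    · exact ⟨a, by simp, b, by simp, h.lt a (by simp) b (by simp),
        by simp +contextual [Set.uIoo, le_of_lt]⟩
    · exact h.hasTwoBlockOn_of_right (hB hB')
  · exact h.hasTwoBlockOn_of_left (hA hA')

end IsDirectSum

namespace SeparableOn

theorem isDecomposable {s : Finset α} (hsep : SeparableOn f s) (hs : s.Nontrivial)
    (hinj : Set.InjOn f s) : IsDecomposable f s := by
  induction s using Finset.strongInductionOn with | _ s ih
  obtain ⟨r, t, hr, rfl⟩ : ∃ r t, (∀ x ∈ t, x < r) ∧ insert r t = s :=
    ⟨s.max' hs.nonempty, s.erase (s.max' hs.nonempty), fun _ => s.lt_max'_of_mem_erase_max' _,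
      Finset.insert_erase (s.max'_mem _)⟩
  have decomposable_of_ssubset {u : Finset α} (hu : u ⊂ insert r t) (hu' : u.Nontrivial) :
      IsDecomposable f u :=
    ih u hu (hsep.mono (Finset.coe_subset.2 hu.subset)) hu'
      (hinj.mono (Finset.coe_subset.2 hu.subset))
  have insert_nontrivial {A : Finset α} (hA : A.Nonempty) (hAt : A ⊆ t) :
      (insert r A).Nontrivial := by
    obtain ⟨a, ha⟩ := hA
    exact ⟨a, by simp [ha], r, by simp, (hr a (hAt ha)).ne⟩
  have ht : t.Nonempty := by
    rw [Finset.nonempty_iff_ne_empty]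
    rintro rfl
    simp at hs
  obtain ⟨a, rfl⟩ | ht' := ht.exists_eq_singleton_or_nontrivial
  · have har : a < r := hr a (Finset.mem_singleton_self a)
    rw [Finset.pair_comm]
    exact isDecomposable_pair har fun h => har.ne (hinj (by simp) (by simp) h)
  · have hrt : r ∉ t := fun h => (hr r h).false
    obtain ⟨A, B, rfl, hAB | hAB⟩ := decomposable_of_ssubset (Finset.ssubset_insert hrt) ht'
    · have hA := decomposable_of_ssubset (hAB.insert_left_ssubset hr)
        (insert_nontrivial hAB.left_nonempty Finset.subset_union_left)
      exact hAB.isDecomposable_insert hr hsep hinj hA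
    · have hA := decomposable_of_ssubset (hAB.insert_left_ssubset hr)
        (insert_nontrivial hAB.left_nonempty Finset.subset_union_left)
      exact isDecomposable_toDual_comp.1 <|
        hAB.isDecomposable_insert hr hsep.toDual hinj (isDecomposable_toDual_comp.2 hA)

theorem hasTwoBlockOn {s : Finset α} (hsep : SeparableOn f s) (hs : s.Nontrivial)
    (hinj : Set.InjOn f s) : HasTwoBlockOn f s := by
  induction s using Finset.strongInductionOn with | _ s ih
  have twoBlock_of_ssubset {u : Finset α} (hu : u ⊂ s) (hu' : u.Nontrivial) : HasTwoBlockOn f u :=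
    ih u hu (hsep.mono (Finset.coe_subset.2 hu.subset)) hu'
      (hinj.mono (Finset.coe_subset.2 hu.subset))
  obtain ⟨A, B, rfl, hAB | hAB⟩ := hsep.isDecomposable hs hinj
  · exact hAB.hasTwoBlockOn (twoBlock_of_ssubset hAB.left_ssubset)
      (twoBlock_of_ssubset hAB.right_ssubset)
  · exact hasTwoBlockOn_toDual_comp.1 <| hAB.hasTwoBlockOn
      (fun hA => hasTwoBlockOn_toDual_comp.2 (twoBlock_of_ssubset hAB.left_ssubset hA))
      (fun hB => hasTwoBlockOn_toDual_comp.2 (twoBlock_of_ssubset hAB.right_ssubset hB))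

end SeparableOn

end LinearOrder

section Perm

variable {n : ℕ} {σ : Perm (Fin n)}

lemma contains_of_strictMono {m : ℕ} {τ : Perm (Fin m)} {g : Fin m → Fin n} (hg : StrictMono g)
    (hσ : StrictMono (σ ∘ g ∘ τ.symm)) : Contains τ σ :=
  ⟨OrderEmbedding.ofStrictMono g hg, fun a b => by
    simpa using (hσ.lt_iff_lt (a := τ a) (b := τ b)).symm⟩

lemma Is2413.contains_p2413 {a b c d : Fin n} (h : Is2413 σ a b c d) : Contains p2413 σ := by
  refine contains_of_strictMono (g := ![a, b, c, d]) (by simp [h.lt_ab, h.lt_bc, h.lt_cd]) ?_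
  have hval : σ ∘ ![a, b, c, d] ∘ p2413.symm = ![σ c, σ a, σ d, σ b] := by
    ext i; fin_cases i <;> rfl
  simp [hval, h.map_lt_ca, h.map_lt_ad, h.map_lt_db]

lemma Is2413.contains_p3142 {a b c d : Fin n} (h : Is2413 (toDual ∘ σ) a b c d) :
    Contains p3142 σ := by
  refine contains_of_strictMono (g := ![a, b, c, d]) (by simp [h.lt_ab, h.lt_bc, h.lt_cd]) ?_
  have hval : σ ∘ ![a, b, c, d] ∘ p3142.symm = ![σ b, σ d, σ a, σ c] := by
    ext i; fin_cases i <;> rfl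
  have hbd : σ b < σ d := h.map_lt_db
  have hda : σ d < σ a := h.map_lt_ad
  have hac : σ a < σ c := h.map_lt_ca
  simp [hval, hbd, hda, hac]

lemma separableOn_of_not_contains (h2413 : ¬ Contains p2413 σ) (h3142 : ¬ Contains p3142 σ)
    (s : Set (Fin n)) : SeparableOn σ s :=
  fun _ _ _ _ _ _ _ _ => ⟨fun h => h2413 h.contains_p2413, fun h => h3142 h.contains_p3142⟩

lemma fdist_comm (a b : Fin n) : fdist a b = fdist b a := by
  rw [fdist, fdist, ← Int.natAbs_neg, neg_sub]

lemma fdist_eq_one_of_covBy {a b : Fin n} (h : a ⋖ b) : fdist a b = 1 := by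
  have hab : (a : ℕ) + 1 = b := Nat.covBy_iff_add_one_eq.1 h.coe_fin
  unfold fdist
  omega

lemma fdist_eq_one_of_uIoo_eq_empty {a b : Fin n} (hab : a ≠ b) (h : Set.uIoo a b = ∅) :
    fdist a b = 1 := by
  wlog hlt : a < b generalizing a b
  · rw [fdist_comm]
    exact this hab.symm (by rwa [Set.uIoo_comm]) (hab.lt_or_gt.resolve_left hlt)
  · exact fdist_eq_one_of_covBy (covBy_iff_Ioo_eq.2 ⟨hlt, by rwa [← Set.uIoo_of_lt hlt]⟩)

lemma IsKing.not_hasTwoBlockOn_univ (hσ : IsKing σ) : ¬ HasTwoBlockOn σ Finset.univ := by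
  rintro ⟨p, -, q, -, hpq, hblock⟩
  have hcov : p ⋖ q := ⟨hpq, fun r hpr hrq => (hblock r (Finset.mem_univ r)).1 ⟨hpr, hrq⟩⟩
  have hval : Set.uIoo (σ p) (σ q) = ∅ := Set.eq_empty_of_forall_notMem <|
    σ.surjective.forall.2 fun r => (hblock r (Finset.mem_univ r)).2
  exact hσ p q (Nat.covBy_iff_add_one_eq.1 hcov.coe_fin).symm
    (fdist_eq_one_of_uIoo_eq_empty (σ.injective.ne hpq.ne) hval)

end Perm

/-- every king permutation of length `n ≥ 4` contains [2413] or [3142]. -/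
theorem every_king_contains_2413_or_3142 (n : ℕ) (hn : 4 ≤ n)
    (π : Equiv.Perm (Fin n)) (hπ : IsKing π) :
    Contains p2413 π ∨ Contains p3142 π := by
  by_contra! ⟨h2413, h3142⟩
  have : Nontrivial (Fin n) := Fin.nontrivial_iff_two_le.2 (by lia)
  have hsep : SeparableOn π (Finset.univ : Finset (Fin n)) :=
    separableOn_of_not_contains h2413 h3142 _
  exact hπ.not_hasTwoBlockOn_univ
    (hsep.hasTwoBlockOn Finset.univ_nontrivial π.injective.injOn)
end

section
/- Let σ be a permutation of length n and suppose σ(i) separates σ(j) from σ(k) where j < i < k. Then ∇_j(∇_i(σ)) = ∇_i(∇_k(σ)). -/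
open Equiv

/-!
Deleting two entries of a permutation does not depend on the order of the deletions, and deleting
either entry of a 2-block gives the same permutation. If `σ i` separates `σ j` from `σ k` and
`j < i < k`, the separation is vertical, so `j = i - 1` and `k = i + 1`, and deleting `σ i` turns
`σ j`, `σ k` into a 2-block of `∇_i(σ)`. Hence
`∇_j(∇_i(σ)) = ∇_i(∇_i(σ)) = ∇_i(∇_k(σ))`.
-/

theorem equiv_eq_of_lt_iff_lt {α β : Type*} [LinearOrder β] [WellFoundedLT β] {e f : α ≃ β}
    (h : ∀ x y, e x < e y ↔ f x < f y) : e = f := by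
  let g : β ≃o β :=
    { toEquiv := e.symm.trans f
      map_rel_iff' := fun {a b} => by
        simpa using (not_congr (h (e.symm b) (e.symm a))).symm }
  have hg : g = OrderIso.refl β := Subsingleton.elim _ _
  ext x
  simpa [g] using (DFunLike.congr_fun hg (e x)).symm

section ManhattanDistance

variable {n : ℕ} {a b c : Fin n}

theorem lt_left_iff_lt_right_of_fdist_eq_one (h : fdist a b = 1) (ha : c ≠ a) (hb : c ≠ b) :
    c < a ↔ c < b := by
  unfold fdist at h
  omega

theorem left_lt_iff_right_lt_of_fdist_eq_one (h : fdist a b = 1) (ha : c ≠ a) (hb : c ≠ b) :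
    a < c ↔ b < c := by
  unfold fdist at h
  omega

theorem fdist_eq_one_of_fdist_succAbove_eq_one (p : Fin (n + 1))
    (h : fdist (p.succAbove a) (p.succAbove b) = 1) : fdist a b = 1 := by
  simp only [fdist, Fin.succAbove, Fin.lt_def] at h ⊢
  grind

end ManhattanDistance

theorem succAbove_castSucc_eq_succAbove_succ {n : ℕ} {j x : Fin n} (h : x ≠ j) :
    j.castSucc.succAbove x = j.succ.succAbove x := by
  rcases h.lt_or_gt with hx | hx
  · rw [Fin.succAbove_castSucc_of_lt _ _ hx, Fin.succAbove_succ_of_le _ _ hx.le]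
  · rw [Fin.succAbove_castSucc_of_le _ _ hx.le, Fin.succAbove_succ_of_lt _ _ hx]

section Nabla

variable {n : ℕ}

theorem succAbove_nabla (σ : Perm (Fin (n + 1))) (i : Fin (n + 1)) (x : Fin n) :
    (σ i).succAbove (nabla σ i x) = σ (i.succAbove x) := by
  let e : Option (Fin n) ≃ Option (Fin n) :=
    (finSuccEquiv' i).symm.trans (σ.trans (finSuccEquiv' (σ i)))
  obtain ⟨y, hy⟩ : ∃ y, (σ i).succAbove y = σ (i.succAbove x) :=
    Fin.exists_succAbove_eq (σ.injective.ne (Fin.succAbove_ne i x))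
  have he : e (some x) = some y := by simp [e, ← hy]
  have hnabla : nabla σ i x = y :=
    Option.some_injective _ ((removeNone_some e ⟨y, he⟩).trans he)
  rw [hnabla, hy]

theorem nabla_lt_nabla_iff (σ : Perm (Fin (n + 1))) (i : Fin (n + 1)) (x y : Fin n) :
    nabla σ i x < nabla σ i y ↔ σ (i.succAbove x) < σ (i.succAbove y) := by
  rw [← succAbove_nabla, ← succAbove_nabla, Fin.succAbove_lt_succAbove_iff]

theorem nabla_nabla_comm (σ : Perm (Fin (n + 2))) (i : Fin (n + 2)) (j : Fin (n + 1)) :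
    nabla (nabla σ i) j = nabla (nabla σ (i.succAbove j)) (j.predAbove i) :=
  equiv_eq_of_lt_iff_lt fun x y => by
    simp only [nabla_lt_nabla_iff, Fin.succAbove_succAbove_succAbove_predAbove]

theorem nabla_castSucc_eq_nabla_succ {σ : Perm (Fin (n + 1))} {j : Fin n}
    (h : HasTwoBlockAt σ j) : nabla σ j.castSucc = nabla σ j.succ := by
  obtain ⟨_, hblock : fdist (σ j.castSucc) (σ j.succ) = 1⟩ := h
  have hne_castSucc {x : Fin n} : σ (j.castSucc.succAbove x) ≠ σ j.castSucc :=
    σ.injective.ne (Fin.succAbove_ne _ x)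
  have hne_succ {x : Fin n} (hx : x ≠ j) : σ (j.castSucc.succAbove x) ≠ σ j.succ := by
    rw [succAbove_castSucc_eq_succAbove_succ hx]
    exact σ.injective.ne (Fin.succAbove_ne _ x)
  refine equiv_eq_of_lt_iff_lt fun x y => ?_
  rw [nabla_lt_nabla_iff, nabla_lt_nabla_iff]
  by_cases hx : x = j <;> by_cases hy : y = j
  · rw [hx, hy, lt_self_iff_false, lt_self_iff_false]
  · rw [hx, ← succAbove_castSucc_eq_succAbove_succ hy, Fin.succAbove_castSucc_self,
      Fin.succAbove_succ_self]
    exact (left_lt_iff_right_lt_of_fdist_eq_one hblock hne_castSucc (hne_succ hy)).symm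
  · rw [hy, ← succAbove_castSucc_eq_succAbove_succ hx, Fin.succAbove_castSucc_self,
      Fin.succAbove_succ_self]
    exact (lt_left_iff_lt_right_of_fdist_eq_one hblock hne_castSucc (hne_succ hx)).symm
  · rw [succAbove_castSucc_eq_succAbove_succ hx, succAbove_castSucc_eq_succAbove_succ hy]

theorem nabla_nabla_adjacent (σ : Perm (Fin (n + 2))) (i : Fin (n + 1)) :
    nabla (nabla σ i.castSucc) i = nabla (nabla σ i.succ) i := by
  rw [nabla_nabla_comm σ i.castSucc i, Fin.succAbove_castSucc_self, Fin.predAbove_castSucc_self]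

end Nabla

theorem Separates.vSep_of_lt {n : ℕ} {σ : Perm (Fin n)} {i j k : Fin n} (h : Separates σ i j k)
    (hji : j < i) (hik : i < k) : VSep σ i j k := by
  refine h.resolve_right fun ⟨_, _, _, _, _, hjk⟩ => ?_
  unfold fdist at hjk
  omega

theorem hasTwoBlockAt_nabla_of_fdist_eq_one {n : ℕ} {σ : Perm (Fin (n + 2))} {t : Fin n}
    (h : fdist (σ t.castSucc.castSucc) (σ t.succ.succ) = 1) :
    HasTwoBlockAt (nabla σ t.succ.castSucc) t := by
  refine ⟨Nat.succ_lt_succ t.isLt, fdist_eq_one_of_fdist_succAbove_eq_one (σ t.succ.castSucc) ?_⟩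
  change fdist ((σ _).succAbove (nabla σ _ t.castSucc)) ((σ _).succAbove (nabla σ _ t.succ)) = 1
  rwa [succAbove_nabla, succAbove_nabla, Fin.succAbove_castSucc_self,
    Fin.succAbove_castSucc_of_lt _ _ Fin.castSucc_lt_succ]

/-- if `σ i` separates `σ j` from `σ k` with `j < i < k`,
then `∇_j(∇_i(σ)) = ∇_i(∇_k(σ))`. -/
theorem nabla_separator_right (n : ℕ) (σ : Equiv.Perm (Fin (n + 2))) (i j k : Fin (n + 2))
    (hji : (j : ℕ) < (i : ℕ)) (hik : (i : ℕ) < (k : ℕ)) (hsep : Separates σ i j k) :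
    nabla (nabla σ i) ⟨(j : ℕ), by have := i.isLt; omega⟩
      = nabla (nabla σ k) ⟨(i : ℕ), by have := k.isLt; omega⟩ := by
  obtain ⟨-, -, -, hij, hik', hval⟩ := hsep.vSep_of_lt hji hik
  unfold fdist at hij hik'
  let t : Fin n := ⟨j, by omega⟩
  have hj : j = t.castSucc.castSucc := rfl
  have hi : i = t.succ.castSucc := Fin.ext (by change (i : ℕ) = j + 1; omega)
  have hk : k = t.succ.succ := Fin.ext (by change (k : ℕ) = j + 1 + 1; omega)
  clear_value t
  subst hj hi hk
  calc nabla (nabla σ t.succ.castSucc) t.castSucc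
      = nabla (nabla σ t.succ.castSucc) t.succ :=
        nabla_castSucc_eq_nabla_succ (hasTwoBlockAt_nabla_of_fdist_eq_one hval)
    _ = nabla (nabla σ t.succ.succ) t.succ := nabla_nabla_adjacent σ t.succ
end

section
/- Let σ and π be king permutations such that π ≺ σ and (length of σ) − (length of π) > 3. Then there exists a king permutation τ such that π ≺ τ ≺ σ and (length of σ) − (length of τ) ∈ {1, 3}. -/
open Equiv

/-!
Call a set `E` of entries of `σ` avoidable if some occurrence of `π` in `σ` is disjoint from it;
deleting such a set leaves a permutation that still contains `π`. If after deleting `E` two entries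
`s`, `t` are adjacent both in position and in value, then `π`, being king, uses at most one of them
in an occurrence avoiding `E`, and the two are interchangeable there, so `insert s E` is avoidable
as well. In particular, if deleting a single avoidable entry `x` does not leave a king permutation,
then `x` separates two entries that are themselves avoidable.

Suppose that this happens for every avoidable `x`. Following the separated pairs from the leftmost
avoidable entry `d` leads, up to reversing the order of values, to an interval of `σ` that begins
with `d` and has pattern `3142`. Its first three entries form an avoidable set, and deleting them
leaves a king permutation: an entry forming a bond with the fourth one would be avoidable but could
not separate any two entries.
-/

theorem mem_uIoo_iff_lt_and_lt {α : Type*} [LinearOrder α] {a b x : α} :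
    x ∈ Set.uIoo a b ↔ a < x ∧ x < b ∨ b < x ∧ x < a := by
  rw [Set.uIoo_eq_union, Set.mem_union, Set.mem_Ioo, Set.mem_Ioo]

theorem exists_apply_eq_of_lt_of_lt {α : Type*} {f : α → ℤ} (hf : (Set.range f).OrdConnected)
    {s t : α} {k : ℤ} (hs : f s < k) (ht : k < f t) : ∃ u, f u = k :=
  hf.out ⟨s, rfl⟩ ⟨t, rfl⟩ ⟨hs.le, ht.le⟩

theorem adjacent_or_straddle_of_between {α : Type*} {f : α → ℤ} (hf : Function.Injective f)
    (hconn : (Set.range f).OrdConnected) {s t x : α} (hst : s ≠ t)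
    (h : ∀ u, f u ∈ Set.uIoo (f s) (f t) → u = x) :
    (f s - f t).natAbs = 1 ∨ (f x = f s + 1 ∧ f t = f x + 1) ∨ (f x = f t + 1 ∧ f s = f x + 1) := by
  wlog hlt : f s < f t generalizing s t
  · have := this hst.symm (by rwa [Set.uIoo_comm]) (by have := hf.ne hst; omega)
    omega
  by_contra! hcon
  obtain ⟨u, hu⟩ := exists_apply_eq_of_lt_of_lt hconn (lt_add_one (f s)) (by omega : _ < f t)
  obtain ⟨v, hv⟩ := exists_apply_eq_of_lt_of_lt hconn (by omega : f s < f t - 1) (sub_one_lt _)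
  have hux : u = x := h u (Set.mem_uIoo_of_lt (by omega) (by omega))
  have hvx : v = x := h v (Set.mem_uIoo_of_lt (by omega) (by omega))
  subst hux hvx
  omega

theorem swap_lt_swap_iff_of_between {α β : Type*} [DecidableEq α] [LinearOrder β] {f : α → β}
    (hf : Function.Injective f) {E : Finset α} {s t u v : α}
    (h : ∀ w, f w ∈ Set.uIoo (f s) (f t) → w ∈ E) (hu : u ∉ E) (hv : v ∉ E) (hut : u ≠ t)
    (hvt : v ≠ t) : f (swap s t u) < f (swap s t v) ↔ f u < f v := by
  have hside {w : α} (hw : w ∉ E) (hws : w ≠ s) (hwt : w ≠ t) :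
      (f t < f w ↔ f s < f w) ∧ (f w < f t ↔ f w < f s) := by
    have hbetween := mt (h w) hw
    rw [mem_uIoo_iff_lt_and_lt] at hbetween
    have := hf.ne hws
    have := hf.ne hwt
    grind
  obtain rfl | hus := eq_or_ne s u <;> obtain rfl | hvs := eq_or_ne s v
  · simp
  · rw [swap_apply_left, swap_apply_of_ne_of_ne hvs.symm hvt, (hside hv hvs.symm hvt).1]
  · rw [swap_apply_left, swap_apply_of_ne_of_ne hus.symm hut, (hside hu hus.symm hut).2]
  · rw [swap_apply_of_ne_of_ne hus.symm hut, swap_apply_of_ne_of_ne hvs.symm hvt]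

/-- The diagram of a permutation, as a set of points `α` with integer coordinates `pos` and `val`
that each run injectively over an interval. The coordinates need not start at `0`, so that diagrams
can be reflected by negating a coordinate. -/
@[ext]
structure PermDiagram (α : Type*) where
  pos : α → ℤ
  val : α → ℤ
  pos_injective : Function.Injective pos
  val_injective : Function.Injective val
  ordConnected_range_pos : (Set.range pos).OrdConnected
  ordConnected_range_val : (Set.range val).OrdConnected

namespace PermDiagram

section Symmetry

variable {α : Type*} (D : PermDiagram α)

/-- The diagram of the inverse permutation. -/
@[simps]
def transpose : PermDiagram α where
  pos := D.val
  val := D.pos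
  pos_injective := D.val_injective
  val_injective := D.pos_injective
  ordConnected_range_pos := D.ordConnected_range_val
  ordConnected_range_val := D.ordConnected_range_pos

/-- The diagram of the complement permutation: the order of the values is reversed. -/
@[simps]
def reflect : PermDiagram α where
  pos := D.pos
  val x := -D.val x
  pos_injective := D.pos_injective
  val_injective := neg_injective.comp D.val_injective
  ordConnected_range_pos := D.ordConnected_range_pos
  ordConnected_range_val := by
    have := D.ordConnected_range_val.preimage_anti fun _ _ h => neg_le_neg h
    rwa [Set.neg_preimage, ← Set.image_neg_eq_neg, ← Set.range_comp] at this

/-- The points `s` and `t` form a bond off `E`: once the points of `E` are deleted, `s` and `t` are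
adjacent both in position and in value. -/
structure Bond (E : Finset α) (s t : α) : Prop where
  ne : s ≠ t
  left_notMem : s ∉ E
  right_notMem : t ∉ E
  mem_of_pos : ∀ u, D.pos u ∈ Set.uIoo (D.pos s) (D.pos t) → u ∈ E
  mem_of_val : ∀ u, D.val u ∈ Set.uIoo (D.val s) (D.val t) → u ∈ E

/-- Deleting the points of `E` leaves the diagram of a king permutation. -/
def KingOff (E : Finset α) : Prop := ∀ s t, ¬ D.Bond E s t

/-- The point `x` separates `s` from `t` vertically: it lies in the column between theirs, and their
values are adjacent. The triple is oriented, with `s` to the left of `t`. -/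
structure VSep (x s t : α) : Prop where
  pos_eq_left : D.pos x = D.pos s + 1
  pos_eq_right : D.pos t = D.pos x + 1
  val_adjacent : (D.val s - D.val t).natAbs = 1

/-- The point `x` separates `s` from `t` horizontally or vertically. -/
def Separates (x s t : α) : Prop := D.VSep x s t ∨ D.transpose.VSep x s t

/-- Every point of `S` separates two points of `S`. -/
def IsSelfSeparating (S : Set α) : Prop := ∀ x ∈ S, ∃ s ∈ S, ∃ t ∈ S, D.Separates x s t

/-- The points `d`, `r`, `a`, `b`, read from left to right, form an interval with pattern
`3142`. -/
structure Is3142 (d r a b : α) : Prop where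
  pos_r : D.pos r = D.pos d + 1
  pos_a : D.pos a = D.pos d + 2
  pos_b : D.pos b = D.pos d + 3
  val_r : D.val r = D.val d - 2
  val_a : D.val a = D.val d + 1
  val_b : D.val b = D.val d - 1

variable {D} {E : Finset α} {d r a b s t u v x : α}

theorem Bond.symm (h : D.Bond E s t) : D.Bond E t s where
  ne := h.ne.symm
  left_notMem := h.right_notMem
  right_notMem := h.left_notMem
  mem_of_pos := by simpa only [Set.uIoo_comm] using h.mem_of_pos
  mem_of_val := by simpa only [Set.uIoo_comm] using h.mem_of_val

theorem Bond.transpose (h : D.Bond E s t) : D.transpose.Bond E s t where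
  __ := h
  mem_of_pos := h.mem_of_val
  mem_of_val := h.mem_of_pos

theorem Bond.reflect (h : D.Bond E s t) : D.reflect.Bond E s t where
  __ := h
  mem_of_pos := h.mem_of_pos
  mem_of_val u hu := h.mem_of_val u <| by
    simp only [mem_uIoo_iff_lt_and_lt, reflect_val, neg_lt_neg_iff] at hu ⊢
    exact hu.symm.imp And.symm And.symm

theorem reflect_reflect : D.reflect.reflect = D := by
  ext <;> simp

theorem bond_reflect : D.reflect.Bond E s t ↔ D.Bond E s t :=
  ⟨fun h => by simpa only [reflect_reflect] using h.reflect, Bond.reflect⟩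

theorem kingOff_reflect : D.reflect.KingOff E ↔ D.KingOff E := by
  simp only [KingOff, bond_reflect]

theorem VSep.reflect (h : D.VSep x s t) : D.reflect.VSep x s t where
  pos_eq_left := h.pos_eq_left
  pos_eq_right := h.pos_eq_right
  val_adjacent := by
    have := h.val_adjacent
    simp only [reflect_val]
    omega

theorem VSep.transpose_reflect (h : D.transpose.VSep x s t) : D.reflect.transpose.VSep x t s where
  pos_eq_left := by have := h.pos_eq_right; simp_all
  pos_eq_right := by have := h.pos_eq_left; simp_all
  val_adjacent := by
    have := h.val_adjacent
    simp only [transpose_val, reflect_pos] at *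
    omega

theorem IsSelfSeparating.reflect {S : Set α} (h : D.IsSelfSeparating S) :
    D.reflect.IsSelfSeparating S := by
  intro x hx
  obtain ⟨s, hs, t, ht, hv | hh⟩ := h x hx
  · exact ⟨s, hs, t, ht, Or.inl hv.reflect⟩
  · exact ⟨t, ht, s, hs, Or.inr hh.transpose_reflect⟩

theorem Is3142.transpose_reflect (h : D.Is3142 d r a b) :
    D.transpose.reflect.Is3142 r b d a := by
  obtain ⟨_, _, _, _, _, _⟩ := h
  constructor <;> simp only [reflect_pos, reflect_val, transpose_pos, transpose_val] <;> omega

end Symmetry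

section King

variable {α : Type*} {D : PermDiagram α} {d a b s t x y : α}

theorem KingOff.not_adjacent (hD : D.KingOff ∅) (hpos : (D.pos s - D.pos t).natAbs = 1) :
    (D.val s - D.val t).natAbs ≠ 1 := by
  intro hval
  refine hD s t ⟨by rintro rfl; omega, by simp, by simp, fun u hu => ?_, fun u hu => ?_⟩ <;>
  · rw [mem_uIoo_iff_lt_and_lt] at hu
    omega

theorem kingOff_empty_iff :
    D.KingOff ∅ ↔
      ∀ s t, (D.pos s - D.pos t).natAbs = 1 → (D.val s - D.val t).natAbs ≠ 1 := by
  refine ⟨fun hD s t => hD.not_adjacent, fun h s t hst => ?_⟩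
  have hpos := adjacent_or_straddle_of_between D.pos_injective D.ordConnected_range_pos hst.ne
    fun u hu => absurd (hst.mem_of_pos u hu) (Finset.notMem_empty u) (b := u = s)
  have hval := adjacent_or_straddle_of_between D.val_injective D.ordConnected_range_val hst.ne
    fun u hu => absurd (hst.mem_of_val u hu) (Finset.notMem_empty u) (b := u = s)
  exact h s t (by omega) (by omega)

theorem Bond.separates (hD : D.KingOff ∅) (h : D.Bond {x} s t) :
    D.Separates x s t ∨ D.Separates x t s := by
  have hpos := adjacent_or_straddle_of_between D.pos_injective D.ordConnected_range_pos h.ne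
    fun u hu => Finset.mem_singleton.1 (h.mem_of_pos u hu)
  have hval := adjacent_or_straddle_of_between D.val_injective D.ordConnected_range_val h.ne
    fun u hu => Finset.mem_singleton.1 (h.mem_of_val u hu)
  rcases hpos with hpos | ⟨hsx, hxt⟩ | ⟨htx, hxs⟩
  · rcases hval with hval | ⟨hsx, hxt⟩ | ⟨htx, hxs⟩
    · exact absurd hval (hD.not_adjacent hpos)
    · exact Or.inl (Or.inr ⟨hsx, hxt, hpos⟩)
    · exact Or.inr (Or.inr ⟨htx, hxs, by simp only [transpose_val]; omega⟩)
  · refine Or.inl (Or.inl ⟨hsx, hxt, ?_⟩)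
    have := hD.not_adjacent (s := x) (t := s) (by omega)
    omega
  · refine Or.inr (Or.inl ⟨htx, hxs, ?_⟩)
    have := hD.not_adjacent (s := x) (t := s) (by omega)
    omega

theorem IsSelfSeparating.exists_of_leftmost {S : Set α} (hD : D.KingOff ∅)
    (hS : D.IsSelfSeparating S) (hleft : ∀ x ∈ S, D.pos d ≤ D.pos x) (hx : x ∈ S)
    (hval_x : D.val x = D.val d + 1) (hval_y : D.val y = D.val d - 1)
    (hxy : (D.pos x - D.pos y).natAbs = 1) :
    (∃ z ∈ S, D.pos z = 2 * D.pos x - D.pos y ∧ D.val z = D.val d - 2) ∨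
      ∃ z, D.pos z = D.pos d + 1 ∧ D.val z = D.val d + 2 := by
  obtain ⟨s, hs, t, ht, ⟨hs₁, ht₁, hst⟩ | ⟨hs₁, ht₁, hst⟩⟩ := hS x hx
  · left
    have hval_of_pos {z : α} (hz : (D.val z - D.val y).natAbs = 1)
        (hpos : D.pos z = 2 * D.pos x - D.pos y) : D.val z = D.val d - 2 := by
      have hzd : z ≠ d := by
        rintro rfl
        exact hD.not_adjacent (s := z) (t := x) (by omega) (by omega)
      have := D.val_injective.ne hzd
      omega
    obtain hys | hyt : D.pos y = D.pos s ∨ D.pos y = D.pos t := by omega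
    · obtain rfl := D.pos_injective hys
      exact ⟨t, ht, by omega, hval_of_pos (by omega) (by omega)⟩
    · obtain rfl := D.pos_injective hyt
      exact ⟨s, hs, by omega, hval_of_pos hst (by omega)⟩
  · simp only [transpose_pos, transpose_val] at hs₁ ht₁ hst
    obtain rfl : s = d := D.val_injective (by omega)
    have := hleft t ht
    exact Or.inr ⟨t, by omega, by omega⟩

theorem IsSelfSeparating.exists_is3142_of_leftmost {S : Set α} (hD : D.KingOff ∅)
    (hS : D.IsSelfSeparating S) (hleft : ∀ x ∈ S, D.pos d ≤ D.pos x) (ha : a ∈ S) (hb : b ∈ S)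
    (hval_a : D.val a = D.val d + 1) (hval_b : D.val b = D.val d - 1)
    (hpos_b : D.pos b = D.pos a + 1) : ∃ r, D.Is3142 d r a b := by
  have hval_congr {u v : α} (h : D.pos u = D.pos v) : D.val u = D.val v := by
    rw [D.pos_injective h]
  have hpos_congr {u v : α} (h : D.val u = D.val v) : D.pos u = D.pos v := by
    rw [D.val_injective h]
  have hda := hleft a ha
  have sep_a := hS.exists_of_leftmost hD hleft ha hval_a hval_b (by omega)
  have sep_b := hS.reflect.exists_of_leftmost (kingOff_reflect.2 hD) hleft hb (d := d) (y := a)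
    (by simp only [reflect_val]; omega) (by simp only [reflect_val]; omega)
    (by simp only [reflect_pos]; omega)
  simp only [reflect_pos, reflect_val] at sep_b
  obtain ⟨r, hr, hpos_r, hval_r⟩ | ⟨x, hpos_x, hval_x⟩ := sep_a
  · refine ⟨r, ?_⟩
    suffices D.pos r = D.pos d + 1 by constructor <;> omega
    obtain ⟨y, -, hpos_y, hval_y⟩ | ⟨y, hpos_y, hval_y⟩ := sep_b
    · obtain ⟨s, -, t, -, ⟨hs₁, ht₁, hst⟩ | ⟨hs₁, ht₁, hst⟩⟩ := hS r hr
      -- The right neighbour of `r` is `a`, so the left one has the value of `d` or of `y`.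
      · have := hval_congr (u := t) (v := a) (by omega)
        have := hpos_congr (u := s) (v := d)
        have := hpos_congr (u := s) (v := y)
        omega
      -- The value above that of `r` is at `b`, between the columns of `a` and `y`.
      · simp only [transpose_pos, transpose_val] at hs₁ ht₁ hst
        have := hpos_congr (u := t) (v := b) (by omega)
        have := hval_congr (u := s) (v := a)
        have := hval_congr (u := s) (v := y)
        omega
    · have := hpos_congr (u := r) (v := y) (by omega)
      omega
  · obtain ⟨y, -, hpos_y, hval_y⟩ | ⟨y, hpos_y, hval_y⟩ := sep_b
    · have := hpos_congr (u := x) (v := y) (by omega)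
      omega
    · have := hval_congr (u := x) (v := y) (by omega)
      omega

theorem IsSelfSeparating.exists_is3142 {S : Set α} [Finite α] (hD : D.KingOff ∅)
    (hS : D.IsSelfSeparating S) (hne : S.Nonempty) :
    ∃ d ∈ S, ∃ r a b, D.Is3142 d r a b ∨ D.reflect.Is3142 d r a b := by
  obtain ⟨d, hd, hleft⟩ := Set.exists_min_image S D.pos S.toFinite hne
  refine ⟨d, hd, ?_⟩
  obtain ⟨s, hs, t, ht, ⟨hs₁, -, -⟩ | ⟨hs₁, ht₁, hst⟩⟩ := hS d hd
  · have := hleft s hs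
    omega
  simp only [transpose_pos, transpose_val] at hs₁ ht₁ hst
  obtain hst | hts : D.pos s = D.pos t + 1 ∨ D.pos t = D.pos s + 1 := by omega
  · obtain ⟨r, h⟩ := hS.exists_is3142_of_leftmost hD hleft ht hs ht₁ (by omega) hst
    exact ⟨r, t, s, Or.inl h⟩
  · obtain ⟨r, h⟩ := hS.reflect.exists_is3142_of_leftmost (kingOff_reflect.2 hD) hleft hs ht
      (by simp only [reflect_val]; omega) (by simp only [reflect_val]; omega) hts
    exact ⟨r, s, t, Or.inr h⟩

end King

section Block

variable {α : Type*} [DecidableEq α] {D : PermDiagram α} {E : Finset α} {d r a b s t u v x : α}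

theorem Is3142.mem_iff_pos (h : D.Is3142 d r a b) :
    u ∈ ({d, r, a, b} : Finset α) ↔ D.pos d ≤ D.pos u ∧ D.pos u ≤ D.pos d + 3 := by
  obtain ⟨hr, ha, hb, -, -, -⟩ := h
  simp only [Finset.mem_insert, Finset.mem_singleton, ← D.pos_injective.eq_iff]
  omega

theorem Is3142.mem_iff_val (h : D.Is3142 d r a b) :
    u ∈ ({d, r, a, b} : Finset α) ↔ D.val d - 2 ≤ D.val u ∧ D.val u ≤ D.val d + 1 := by
  obtain ⟨-, -, -, hr, ha, hb⟩ := h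
  simp only [Finset.mem_insert, Finset.mem_singleton, ← D.val_injective.eq_iff]
  omega

theorem Is3142.mem_or_mem_of_bond (h : D.Is3142 d r a b) (hD : D.KingOff ∅)
    (hE : E ⊆ {d, r, a, b}) (hx : x ∈ ({d, r, a, b} : Finset α)) (hxE : x ∉ E)
    (hst : D.Bond E s t) : s ∈ ({d, r, a, b} : Finset α) ∨ t ∈ ({d, r, a, b} : Finset α) := by
  by_contra! ⟨hs, ht⟩
  refine hD s t ⟨hst.ne, by simp, by simp, fun u hu => absurd ?_ hxE, fun u hu => absurd ?_ hxE⟩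
  · have huE := hE (hst.mem_of_pos u hu)
    apply hst.mem_of_pos
    rw [h.mem_iff_pos] at huE hx hs ht
    rw [mem_uIoo_iff_lt_and_lt] at hu ⊢
    omega
  · have huE := hE (hst.mem_of_val u hu)
    apply hst.mem_of_val
    rw [h.mem_iff_val] at huE hx hs ht
    rw [mem_uIoo_iff_lt_and_lt] at hu ⊢
    omega

theorem Is3142.pos_eq_of_bond (h : D.Is3142 d r a b) (hE : E ⊆ {d, r, a, b})
    (hx : x ∈ ({d, r, a, b} : Finset α)) (hs : s ∉ ({d, r, a, b} : Finset α))
    (hsx : D.Bond E s x) : D.pos s = D.pos d - 1 ∨ D.pos s = D.pos d + 4 := by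
  by_contra! ⟨hleft, hright⟩
  rw [h.mem_iff_pos] at hx hs
  obtain ⟨u, hu, hout⟩ :
      ∃ u, D.pos u ∈ Set.uIoo (D.pos s) (D.pos x) ∧
        (D.pos u = D.pos d - 1 ∨ D.pos u = D.pos d + 4) := by
    simp only [mem_uIoo_iff_lt_and_lt]
    rcases lt_or_ge (D.pos s) (D.pos d) with hlt | hge
    · obtain ⟨u, hu⟩ := exists_apply_eq_of_lt_of_lt D.ordConnected_range_pos
        (s := s) (t := d) (k := D.pos d - 1) (by omega) (by omega)
      exact ⟨u, by omega, Or.inl hu⟩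
    · obtain ⟨u, hu⟩ := exists_apply_eq_of_lt_of_lt D.ordConnected_range_pos
        (s := x) (t := s) (k := D.pos d + 4) (by omega) (by omega)
      exact ⟨u, by omega, Or.inr hu⟩
  have := h.mem_iff_pos.1 (hE (hsx.mem_of_pos u hu))
  omega

theorem Is3142.not_vSep_of_bond (h : D.Is3142 d r a b) (hE : E ⊆ {d, r, a, b})
    (hx : x ∈ ({d, r, a, b} : Finset α)) (hs : s ∉ ({d, r, a, b} : Finset α))
    (hsx : D.Bond E s x) : ¬ D.VSep s u v := by
  rintro ⟨hu, hv, huv⟩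
  have hend {y : α} (hy : D.pos y = D.pos d ∨ D.pos y = D.pos d + 3) :
      D.val y = D.val d ∨ D.val y = D.val d - 1 := by
    rcases hy with hy | hy
    · exact Or.inl (by rw [D.pos_injective hy])
    · rw [← h.pos_b] at hy
      exact Or.inr (by rw [D.pos_injective hy, h.val_b])
  have hend_u := hend (y := u)
  have hend_v := hend (y := v)
  have hpos_s := h.pos_eq_of_bond hE hx hs hsx
  -- The outer columns of the interval hold its inner values, so `u` and `v` both lie in its rows.
  have hu_mem := h.mem_iff_pos.1 ((h.mem_iff_val (u := u)).2 (by omega))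
  have hv_mem := h.mem_iff_pos.1 ((h.mem_iff_val (u := v)).2 (by omega))
  rw [h.mem_iff_pos] at hs
  omega

theorem Is3142.not_separates_of_bond (h : D.Is3142 d r a b) (hE : E ⊆ {d, r, a, b})
    (hx : x ∈ ({d, r, a, b} : Finset α)) (hs : s ∉ ({d, r, a, b} : Finset α))
    (hsx : D.Bond E s x) : ¬ D.Separates s u v := by
  have hrot : ({r, b, d, a} : Finset α) = {d, r, a, b} := by grind
  rintro (hv | hh)
  · exact h.not_vSep_of_bond hE hx hs hsx hv
  · rw [← hrot] at hE hx hs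
    exact h.transpose_reflect.not_vSep_of_bond hE hx hs hsx.transpose.reflect hh.reflect

end Block

section Deletion

variable {α : Type*} [DecidableEq α] {D : PermDiagram α} {𝒜 : LowerSet (Finset α)}
  {E : Finset α} {d r a b : α}

/-- The family `𝒜` is closed under inserting an endpoint of any bond off one of its members. -/
def IsExchangeClosed (D : PermDiagram α) (𝒜 : LowerSet (Finset α)) : Prop :=
  ∀ E ∈ 𝒜, ∀ s t, D.Bond E s t → insert s E ∈ 𝒜

theorem IsExchangeClosed.reflect (h : D.IsExchangeClosed 𝒜) : D.reflect.IsExchangeClosed 𝒜 :=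
  fun E hE s t hst => h E hE s t (bond_reflect.1 hst)

theorem IsExchangeClosed.singleton_mem (h : D.IsExchangeClosed 𝒜) (hE : E ∈ 𝒜) {s t : α}
    (hst : D.Bond E s t) : {s} ∈ 𝒜 :=
  𝒜.lower (by simp) (h E hE s t hst)

theorem IsExchangeClosed.isSelfSeparating (h : D.IsExchangeClosed 𝒜) (hD : D.KingOff ∅)
    (hbond : ∀ x, {x} ∈ 𝒜 → ¬ D.KingOff {x}) : D.IsSelfSeparating {x | {x} ∈ 𝒜} := by
  intro x hx
  obtain ⟨s, t, hst⟩ : ∃ s t, D.Bond {x} s t := by simpa [KingOff] using hbond x hx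
  have hs := h.singleton_mem hx hst
  have ht := h.singleton_mem hx hst.symm
  rcases hst.separates hD with hsep | hsep
  · exact ⟨s, hs, t, ht, hsep⟩
  · exact ⟨t, ht, s, hs, hsep⟩

theorem Is3142.insert_insert_mem (h : D.Is3142 d r a b) (h𝒜 : D.IsExchangeClosed 𝒜)
    (hd : {d} ∈ 𝒜) : {r, a, d} ∈ 𝒜 := by
  obtain ⟨hpos_r, hpos_a, hpos_b, hval_r, hval_a, hval_b⟩ := h
  have hne {u v : α} (huv : D.pos u ≠ D.pos v) : u ≠ v := ne_of_apply_ne D.pos huv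
  have had : a ≠ d := hne (by omega)
  have hbd : b ≠ d := hne (by omega)
  have hra : r ≠ a := hne (by omega)
  have hrd : r ≠ d := hne (by omega)
  have hba : b ≠ a := hne (by omega)
  have hbond_ab : D.Bond {d} a b := by
    refine ⟨hba.symm, by simpa, by simpa, fun u hu => ?_, fun u hu => ?_⟩ <;>
      rw [mem_uIoo_iff_lt_and_lt] at hu
    · omega
    · rw [Finset.mem_singleton, ← D.val_injective.eq_iff]
      omega
  have hbond_rb : D.Bond {a, d} r b := by
    refine ⟨hne (by omega), by simp [hra, hrd], by simp [hba, hbd], fun u hu => ?_,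
      fun u hu => ?_⟩ <;> rw [mem_uIoo_iff_lt_and_lt] at hu
    · rw [Finset.mem_insert, ← D.pos_injective.eq_iff]
      omega
    · omega
  exact h𝒜 _ (h𝒜 _ hd a b hbond_ab) r b hbond_rb

theorem Is3142.card_eq_three (h : D.Is3142 d r a b) : ({r, a, d} : Finset α).card = 3 := by
  obtain ⟨hpos_r, hpos_a, -, -, -, -⟩ := h
  refine Finset.card_eq_three.2 ⟨r, a, d, ?_, ?_, ?_, rfl⟩ <;>
    exact ne_of_apply_ne D.pos (by omega)

theorem Is3142.kingOff (h : D.Is3142 d r a b) (hD : D.KingOff ∅)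
    (hsep : ∀ s, D.Bond {r, a, d} s b → ∃ u v, D.Separates s u v) : D.KingOff {r, a, d} := by
  have hE : ({r, a, d} : Finset α) ⊆ {d, r, a, b} := by grind
  have hb : b ∈ ({d, r, a, b} : Finset α) := by simp
  have hmem {u : α} (hu : u ∈ ({d, r, a, b} : Finset α)) (huE : u ∉ ({r, a, d} : Finset α)) :
      u = b := by grind
  have hb_bond (s : α) : ¬ D.Bond {r, a, d} s b := by
    intro hsb
    obtain ⟨u, v, huv⟩ := hsep s hsb
    exact h.not_separates_of_bond hE hb (fun hs => hsb.ne (hmem hs hsb.left_notMem)) hsb huv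
  intro s t hst
  have hbE : b ∉ ({r, a, d} : Finset α) := by
    have := h.pos_r
    have := h.pos_a
    have := h.pos_b
    simp only [Finset.mem_insert, Finset.mem_singleton, ← D.pos_injective.eq_iff]
    omega
  rcases h.mem_or_mem_of_bond hD hE hb hbE hst with hs | ht
  · exact hb_bond t (hmem hs hst.left_notMem ▸ hst.symm)
  · exact hb_bond s (hmem ht hst.right_notMem ▸ hst)

theorem Is3142.exists_kingOff_card_eq_three (h : D.Is3142 d r a b) (hD : D.KingOff ∅)
    (h𝒜 : D.IsExchangeClosed 𝒜) (hself : D.IsSelfSeparating {x | {x} ∈ 𝒜}) (hd : {d} ∈ 𝒜) :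
    ∃ E ∈ 𝒜, D.KingOff E ∧ E.card = 3 := by
  have hE := h.insert_insert_mem h𝒜 hd
  refine ⟨{r, a, d}, hE, h.kingOff hD fun s hs => ?_, h.card_eq_three⟩
  obtain ⟨u, -, v, -, huv⟩ := hself s (h𝒜.singleton_mem hE hs)
  exact ⟨u, v, huv⟩

theorem IsExchangeClosed.exists_kingOff_card [Finite α] (h𝒜 : D.IsExchangeClosed 𝒜)
    (hD : D.KingOff ∅) (hne : ∃ x, {x} ∈ 𝒜) :
    ∃ E ∈ 𝒜, D.KingOff E ∧ (E.card = 1 ∨ E.card = 3) := by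
  by_cases hbond : ∃ x, {x} ∈ 𝒜 ∧ D.KingOff {x}
  · obtain ⟨x, hx, hking⟩ := hbond
    exact ⟨{x}, hx, hking, Or.inl (Finset.card_singleton x)⟩
  push Not at hbond
  have hself := h𝒜.isSelfSeparating hD hbond
  obtain ⟨d, hd, r, a, b, h | h⟩ := hself.exists_is3142 hD hne
  · obtain ⟨E, hE, hking, hcard⟩ := h.exists_kingOff_card_eq_three hD h𝒜 hself hd
    exact ⟨E, hE, hking, Or.inr hcard⟩
  · obtain ⟨E, hE, hking, hcard⟩ :=
      h.exists_kingOff_card_eq_three (kingOff_reflect.2 hD) h𝒜.reflect hself.reflect hd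
    exact ⟨E, hE, kingOff_reflect.1 hking, Or.inr hcard⟩

end Deletion

section Occurrence

variable {α β γ : Type*} {C : PermDiagram γ} {B : PermDiagram β} {D : PermDiagram α}
  {E : Finset α} {f : β → α} {s t : α}

/-- The map `f` embeds the pattern `B` into `D`. -/
structure IsOccurrence (B : PermDiagram β) (D : PermDiagram α) (f : β → α) : Prop where
  pos_lt_iff : ∀ a b, D.pos (f a) < D.pos (f b) ↔ B.pos a < B.pos b
  val_lt_iff : ∀ a b, D.val (f a) < D.val (f b) ↔ B.val a < B.val b

theorem IsOccurrence.injective (hf : B.IsOccurrence D f) : Function.Injective f := by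
  intro a b hab
  have hlt := hf.pos_lt_iff a b
  have hgt := hf.pos_lt_iff b a
  rw [hab] at hlt hgt
  exact B.pos_injective (by omega)

theorem IsOccurrence.of_comp {g : γ → β} (hf : B.IsOccurrence D f)
    (hfg : C.IsOccurrence D (f ∘ g)) : C.IsOccurrence B g where
  pos_lt_iff a b := (hf.pos_lt_iff _ _).symm.trans (hfg.pos_lt_iff a b)
  val_lt_iff a b := (hf.val_lt_iff _ _).symm.trans (hfg.val_lt_iff a b)

theorem IsOccurrence.bond_empty_of_bond (hf : B.IsOccurrence D f) (hE : ∀ c, f c ∉ E) {a b : β}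
    (hab : D.Bond E (f a) (f b)) : B.Bond ∅ a b where
  ne := ne_of_apply_ne f hab.ne
  left_notMem := Finset.notMem_empty a
  right_notMem := Finset.notMem_empty b
  mem_of_pos c hc := absurd (hab.mem_of_pos (f c)
    (by simpa only [mem_uIoo_iff_lt_and_lt, hf.pos_lt_iff] using hc)) (hE c)
  mem_of_val c hc := absurd (hab.mem_of_val (f c)
    (by simpa only [mem_uIoo_iff_lt_and_lt, hf.val_lt_iff] using hc)) (hE c)

theorem IsOccurrence.bond_of_bond_empty (hf : B.IsOccurrence D f)
    (hrange : ∀ x, x ∉ E ↔ x ∈ Set.range f) {a b : β} (hab : B.Bond ∅ a b) :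
    D.Bond E (f a) (f b) where
  ne := hf.injective.ne hab.ne
  left_notMem := (hrange _).2 ⟨a, rfl⟩
  right_notMem := (hrange _).2 ⟨b, rfl⟩
  mem_of_pos u hu := by
    by_contra huE
    obtain ⟨c, rfl⟩ := (hrange u).1 huE
    exact Finset.notMem_empty c (hab.mem_of_pos c
      (by simpa only [mem_uIoo_iff_lt_and_lt, hf.pos_lt_iff] using hu))
  mem_of_val u hu := by
    by_contra huE
    obtain ⟨c, rfl⟩ := (hrange u).1 huE
    exact Finset.notMem_empty c (hab.mem_of_val c
      (by simpa only [mem_uIoo_iff_lt_and_lt, hf.val_lt_iff] using hu))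

theorem IsOccurrence.swap_comp [DecidableEq α] (hf : B.IsOccurrence D f) (hE : ∀ c, f c ∉ E)
    (ht : ∀ c, f c ≠ t) (hst : D.Bond E s t) : B.IsOccurrence D (swap s t ∘ f) where
  pos_lt_iff a b := (swap_lt_swap_iff_of_between D.pos_injective hst.mem_of_pos (hE a) (hE b)
    (ht a) (ht b)).trans (hf.pos_lt_iff a b)
  val_lt_iff a b := (swap_lt_swap_iff_of_between D.val_injective hst.mem_of_val (hE a) (hE b)
    (ht a) (ht b)).trans (hf.val_lt_iff a b)

/-- The sets of points of `D` that are disjoint from some occurrence of the pattern `B`. -/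
def avoidable (B : PermDiagram β) (D : PermDiagram α) : LowerSet (Finset α) where
  carrier := {E | ∃ f, B.IsOccurrence D f ∧ ∀ c, f c ∉ E}
  lower' := fun _ _ hle ⟨f, hf, hE⟩ => ⟨f, hf, fun c hc => hE c (hle hc)⟩

theorem isExchangeClosed_avoidable [DecidableEq α] (hB : B.KingOff ∅) :
    D.IsExchangeClosed (B.avoidable D) := by
  rintro E ⟨f, hf, hE⟩ s t hst
  by_cases hs : ∃ a, f a = s
  · obtain ⟨a, rfl⟩ := hs
    have ht (b : β) : f b ≠ t := by
      rintro rfl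
      exact hB a b (hf.bond_empty_of_bond hE hst)
    refine ⟨swap (f a) t ∘ f, hf.swap_comp hE ht hst, fun c hc => ?_⟩
    rw [Finset.mem_insert, Function.comp_apply, swap_apply_def] at hc
    grind [hst.ne, hst.right_notMem]
  · push Not at hs
    exact ⟨f, hf, fun c => by simp [hs c, hE c]⟩

end Occurrence

section Perm

variable {l m n : ℕ}

theorem ordConnected_range_natCast_val :
    (Set.range fun i : Fin n => ((i : ℕ) : ℤ)).OrdConnected := by
  refine ⟨?_⟩
  rintro _ ⟨i, rfl⟩ _ ⟨j, rfl⟩ k ⟨hik, hkj⟩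
  dsimp only at hik hkj
  exact ⟨⟨k.toNat, by omega⟩, by dsimp only; omega⟩

/-- The diagram of a permutation in one-line notation. -/
@[simps]
def ofPerm (σ : Perm (Fin n)) : PermDiagram (Fin n) where
  pos i := (i : ℕ)
  val i := (σ i : ℕ)
  pos_injective := Nat.cast_injective.comp Fin.val_injective
  val_injective := (Nat.cast_injective.comp Fin.val_injective).comp σ.injective
  ordConnected_range_pos := ordConnected_range_natCast_val
  ordConnected_range_val := by
    have hval := ordConnected_range_natCast_val (n := n)
    rwa [← σ.surjective.range_comp] at hval

theorem isKing_iff_kingOff_ofPerm (σ : Perm (Fin n)) : IsKing σ ↔ (ofPerm σ).KingOff ∅ := by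
  rw [kingOff_empty_iff]
  refine ⟨fun h i j hpos => ?_, fun h i j hij => h i j (by simp [hij])⟩
  obtain hij | hji : (j : ℕ) = i + 1 ∨ (i : ℕ) = j + 1 := by
    simp only [ofPerm_pos] at hpos
    omega
  · exact h i j hij
  · rw [← Int.natAbs_neg, neg_sub]
    exact h j i hji

theorem contains_iff_exists_isOccurrence {π : Perm (Fin m)} {σ : Perm (Fin n)} :
    Contains π σ ↔ ∃ f, (ofPerm π).IsOccurrence (ofPerm σ) f := by
  constructor
  · rintro ⟨f, hf⟩
    exact ⟨f, by simp, fun a b => by simpa using (hf a b).symm⟩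
  · rintro ⟨f, hpos, hval⟩
    have hmono : StrictMono f := fun a b hab => by simpa using (hpos a b).2 (by simpa)
    exact ⟨OrderEmbedding.ofStrictMono f hmono, fun a b => by simpa using (hval a b).symm⟩

theorem exists_isOccurrence_range_eq (σ : Perm (Fin n)) {s : Finset (Fin n)} (hs : s.card = l) :
    ∃ (τ : Perm (Fin l)) (f : Fin l → Fin n),
      (ofPerm τ).IsOccurrence (ofPerm σ) f ∧ Set.range f = s := by
  let f := s.orderEmbOfFin hs
  have hmono : StrictMono ((σ ∘ f) ∘ Tuple.sort (σ ∘ f)) :=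
    (Tuple.monotone_sort _).strictMono_of_injective
      ((σ.injective.comp f.injective).comp (Tuple.sort _).injective)
  refine ⟨(Tuple.sort (σ ∘ f))⁻¹, f, ⟨fun a b => by simp, fun a b => ?_⟩, s.range_orderEmbOfFin hs⟩
  have := hmono.lt_iff_lt (a := (Tuple.sort (σ ∘ f))⁻¹ a) (b := (Tuple.sort (σ ∘ f))⁻¹ b)
  simpa using this

end Perm

end PermDiagram

open PermDiagram

theorem StrictContains.exists_singleton_mem_avoidable {m n : ℕ} {π : Perm (Fin m)}
    {σ : Perm (Fin n)} (h : StrictContains π σ) : ∃ x, {x} ∈ (ofPerm π).avoidable (ofPerm σ) := by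
  obtain ⟨hcontains, hlt⟩ := h
  obtain ⟨f, hf⟩ := contains_iff_exists_isOccurrence.1 hcontains
  have hsurj : ¬ Function.Surjective f := fun hsurj =>
    hlt.not_ge (by simpa using Fintype.card_le_of_surjective f hsurj)
  obtain ⟨x, hx⟩ : ∃ x, ∀ c, f c ≠ x := by simpa [Function.Surjective] using hsurj
  exact ⟨x, f, hf, fun c => by simpa using hx c⟩

theorem exists_isKing_of_mem_avoidable {l m n : ℕ} {π : Perm (Fin m)} {σ : Perm (Fin n)}
    {E : Finset (Fin n)} (hE : E ∈ (ofPerm π).avoidable (ofPerm σ))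
    (hking : (ofPerm σ).KingOff E) (hcard : l + E.card = n) :
    ∃ τ : Perm (Fin l), IsKing τ ∧ Contains π τ ∧ Contains τ σ := by
  have hcompl : Eᶜ.card = l := by rw [Finset.card_compl, Fintype.card_fin]; omega
  obtain ⟨τ, g, hg, hrange⟩ := exists_isOccurrence_range_eq σ hcompl
  have hmem (x : Fin n) : x ∉ E ↔ x ∈ Set.range g := by simp [hrange]
  obtain ⟨f, hf, hfE⟩ := hE
  choose k hk using fun c => (hmem (f c)).1 (hfE c)
  obtain rfl : g ∘ k = f := funext hk
  refine ⟨τ, ?_, contains_iff_exists_isOccurrence.2 ⟨k, hg.of_comp hf⟩,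
    contains_iff_exists_isOccurrence.2 ⟨g, hg⟩⟩
  rw [isKing_iff_kingOff_ofPerm]
  exact fun a b hab => hking _ _ (hg.bond_of_bond_empty hmem hab)

theorem step_one_or_three_general {m n : ℕ} {π : Perm (Fin m)} {σ : Perm (Fin n)}
    (hπ : IsKing π) (hσ : IsKing σ) (hπσ : StrictContains π σ) :
    ∃ (l : ℕ) (τ : Perm (Fin l)),
      IsKing τ ∧ Contains π τ ∧ StrictContains τ σ ∧ (n = l + 1 ∨ n = l + 3) := by
  rw [isKing_iff_kingOff_ofPerm] at hπ hσ
  obtain ⟨E, hE, hking, hcard⟩ := (isExchangeClosed_avoidable hπ).exists_kingOff_card hσ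
    hπσ.exists_singleton_mem_avoidable
  have hle : E.card ≤ n := by simpa using E.card_le_univ
  obtain ⟨τ, hτ, hπτ, hτσ⟩ := exists_isKing_of_mem_avoidable hE hking (Nat.sub_add_cancel hle)
  exact ⟨n - E.card, τ, hτ, hπτ, ⟨hτσ, by omega⟩, by omega⟩

/-- if `π ≺ σ` are kings with length gap `> 3`, there is a king `τ`
with `π ≺ τ ≺ σ` whose length is smaller than that of `σ` by `1` or `3`. -/
theorem step_one_or_three (m n : ℕ) (π : Equiv.Perm (Fin m)) (σ : Equiv.Perm (Fin n))
    (hπ : IsKing π) (hσ : IsKing σ) (hπσ : StrictContains π σ) (hgap : m + 3 < n) :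
    ∃ (l : ℕ) (τ : Equiv.Perm (Fin l)),
      IsKing τ ∧ StrictContains π τ ∧ StrictContains τ σ ∧ (n = l + 1 ∨ n = l + 3) := by
  obtain ⟨l, τ, hτ, hπτ, hτσ, hl⟩ := step_one_or_three_general hπ hσ hπσ
  exact ⟨l, τ, hτ, ⟨hπτ, by omega⟩, hτσ, hl⟩
end

section
/- For any two king permutations π ≺ σ there exists a chain of king permutations π = π^0 ≺ π^1 ≺ ⋯ ≺ π^k = σ such that for each 1 ≤ i ≤ k, (length of π^i) − (length of π^{i−1}) ∈ {1, 3}. -/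
open Equiv

/-! A permutation is a king permutation if and only if every two of its entries are *split* by a
third one, lying strictly between them in position or in value. Call an entry of `σ` avoidable if
some occurrence of `π` misses it. If deleting an avoidable entry `i` does not leave a king
permutation, then `i` alone splits some two entries, it separates them, and swapping the two in an
occurrence of `π` shows that both are avoidable.

So if no single deletion works, every avoidable entry separates two avoidable entries. Consider the
least distance in the other coordinate between an entry and the nearer of the two it separates.
Around an entry attaining this distance the configuration is forced: either the distance is `2` and
there is a block of the form `2413` or `3142`, or the next entry attains the same distance, and
moving on one would leave the permutation. An occurrence of `π` that misses an entry of a block uses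
at most one of its entries, as no pattern of length `2` or `3` is a king permutation. Contracting
the block to a single entry therefore removes three entries and keeps `π`. It leaves a king
permutation: an entry outside the block that nothing splits from it would be avoidable, hence would
separate an entry of the block from one outside, but every entry of the block is interior in
position or in value.
-/

section Splitting

variable {n : ℕ} {σ : Perm (Fin n)}

theorem mem_uIoo_iff {α : Type*} [LinearOrder α] {a b c : α} :
    c ∈ Set.uIoo a b ↔ (a < c ∧ c < b) ∨ (b < c ∧ c < a) := by
  rcases le_total a b with h | h
  · simp only [Set.uIoo_of_le h, Set.mem_Ioo, iff_self_or]
    exact fun hc => absurd (hc.1.trans hc.2) h.not_gt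
  · simp only [Set.uIoo_of_ge h, Set.mem_Ioo, iff_or_self]
    exact fun hc => absurd (hc.1.trans hc.2) h.not_gt

/-- The entry at position `c` lies strictly between the entries at positions `i` and `j`, in
position or in value. -/
def Splits (σ : Perm (Fin n)) (c i j : Fin n) : Prop :=
  c ∈ Set.uIoo i j ∨ σ c ∈ Set.uIoo (σ i) (σ j)

theorem Splits.symm {c i j : Fin n} (h : Splits σ c i j) : Splits σ c j i := by
  simpa only [Splits, Set.uIoo_comm] using h

theorem splits_iff {c i j : Fin n} : Splits σ c i j ↔
    ((i < c ∧ c < j) ∨ (j < c ∧ c < i)) ∨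
      ((σ i < σ c ∧ σ c < σ j) ∨ (σ j < σ c ∧ σ c < σ i)) := by
  simp only [Splits, mem_uIoo_iff]

/-- The pattern of `σ` on the positions in `T` is a king permutation: every two of these entries
are split by a third one. -/
def IsKingOn (σ : Perm (Fin n)) (T : Set (Fin n)) : Prop :=
  ∀ i ∈ T, ∀ j ∈ T, i ≠ j → ∃ c ∈ T, Splits σ c i j

theorem exists_mem_uIoo_of_fdist_ne_one {i j : Fin n} (hij : i ≠ j) (h : fdist i j ≠ 1) :
    ∃ c, c ∈ Set.uIoo i j := by
  wlog hlt : i < j generalizing i j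
  · rw [Set.uIoo_comm]
    exact this hij.symm (by unfold fdist at *; omega) (by omega)
  · unfold fdist at h
    exact ⟨⟨i + 1, by omega⟩, Set.mem_uIoo_of_lt (by simp only [Fin.lt_def]; omega)
      (by simp only [Fin.lt_def]; omega)⟩

theorem fdist_eq_one_or_of_forall_notMem_uIoo {i j k : Fin n} (hij : i ≠ j)
    (h : ∀ c ≠ k, c ∉ Set.uIoo i j) : fdist i j = 1 ∨ (fdist k i = 1 ∧ fdist k j = 1) := by
  refine or_iff_not_imp_left.mpr fun hd => ?_
  obtain ⟨c, hc⟩ := exists_mem_uIoo_of_fdist_ne_one hij hd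
  obtain rfl : c = k := by_contra fun hck => h c hck hc
  have hne : c ≠ i ∧ c ≠ j := ⟨by rintro rfl; simp at hc, by rintro rfl; simp at hc⟩
  simp only [mem_uIoo_iff] at h hc
  constructor <;> by_contra hcd
  · obtain ⟨b, hb⟩ := exists_mem_uIoo_of_fdist_ne_one hne.1 hcd
    rw [mem_uIoo_iff] at hb
    exact h b (by omega) (by omega)
  · obtain ⟨b, hb⟩ := exists_mem_uIoo_of_fdist_ne_one hne.2 hcd
    rw [mem_uIoo_iff] at hb
    exact h b (by omega) (by omega)

theorem IsKing.fdist_apply_ne_one (hσ : IsKing σ) {i j : Fin n} (h : fdist i j = 1) :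
    fdist (σ i) (σ j) ≠ 1 := by
  have hij := hσ i j
  have hji := hσ j i
  unfold fdist at *
  omega

theorem isKing_iff_isKingOn_univ : IsKing σ ↔ IsKingOn σ Set.univ := by
  constructor
  · intro hσ i _ j _ hij
    by_cases hd : fdist i j = 1
    · obtain ⟨c, hc⟩ :=
        exists_mem_uIoo_of_fdist_ne_one (σ.injective.ne hij) (hσ.fdist_apply_ne_one hd)
      exact ⟨σ.symm c, trivial, Or.inr (by rwa [apply_symm_apply])⟩
    · obtain ⟨c, hc⟩ := exists_mem_uIoo_of_fdist_ne_one hij hd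
      exact ⟨c, trivial, Or.inl hc⟩
  · intro h i j hij hd
    obtain ⟨c, -, hc⟩ := h i trivial j trivial (by omega)
    rw [splits_iff] at hc
    unfold fdist at hd
    omega

theorem IsKing.exists_splits (hσ : IsKing σ) {i j : Fin n} (hij : i ≠ j) :
    ∃ c, Splits σ c i j := by
  obtain ⟨c, -, hc⟩ := isKing_iff_isKingOn_univ.mp hσ i trivial j trivial hij
  exact ⟨c, hc⟩

theorem IsKing.separates_of_forall_not_splits (hσ : IsKing σ) {i j k : Fin n} (hjk : j ≠ k)
    (h : ∀ c ≠ i, ¬Splits σ c j k) : Separates σ i j k := by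
  have hpos := fdist_eq_one_or_of_forall_notMem_uIoo hjk fun c hc hmem => h c hc (Or.inl hmem)
  have hval : fdist (σ j) (σ k) = 1 ∨ (fdist (σ i) (σ j) = 1 ∧ fdist (σ i) (σ k) = 1) := by
    refine fdist_eq_one_or_of_forall_notMem_uIoo (σ.injective.ne hjk) fun c hc hmem =>
      h (σ.symm c) (by rwa [ne_eq, symm_apply_eq]) (Or.inr (by rwa [apply_symm_apply]))
  obtain ⟨c, hc⟩ := hσ.exists_splits hjk
  obtain rfl : c = i := by_contra fun hci => h c hci hc
  have hcj : c ≠ j := by rintro rfl; simp [Splits] at hc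
  have hck : c ≠ k := by rintro rfl; simp [Splits] at hc
  rcases hpos with hpos | hpos <;> rcases hval with hval | hval
  · exact absurd hval (hσ.fdist_apply_ne_one hpos)
  · exact Or.inr ⟨hcj, hck, hjk, hval.1, hval.2, hpos⟩
  · exact Or.inl ⟨hcj, hck, hjk, hpos.1, hpos.2, hval⟩
  · exact absurd hval.1 (hσ.fdist_apply_ne_one hpos.1)

end Splitting

section Occurrences

variable {m n l : ℕ} {π : Perm (Fin m)} {σ : Perm (Fin n)} {f : Fin m → Fin n}

/-- The map `f` sends the positions of `π` to the positions of an occurrence of the pattern `π`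
in `σ`. -/
structure IsOccurrence (π : Perm (Fin m)) (σ : Perm (Fin n)) (f : Fin m → Fin n) : Prop where
  lt_iff_lt : ∀ a b, f a < f b ↔ a < b
  apply_lt_apply_iff : ∀ a b, σ (f a) < σ (f b) ↔ π a < π b

theorem contains_iff_exists_isOccurrence : Contains π σ ↔ ∃ f, IsOccurrence π σ f :=
  ⟨fun ⟨f, hf⟩ => ⟨f, fun _ _ => f.lt_iff_lt, fun a b => (hf a b).symm⟩,
    fun ⟨f, hf⟩ => ⟨.ofStrictMono f fun a b => (hf.lt_iff_lt a b).mpr,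
      fun a b => (hf.apply_lt_apply_iff a b).symm⟩⟩

namespace IsOccurrence

theorem injective (hf : IsOccurrence π σ f) : Function.Injective f :=
  StrictMono.injective fun a b => (hf.lt_iff_lt a b).mpr

theorem splits_iff (hf : IsOccurrence π σ f) {a b c : Fin m} :
    Splits σ (f c) (f a) (f b) ↔ Splits π c a b := by
  simp only [_root_.splits_iff, hf.lt_iff_lt, hf.apply_lt_apply_iff]

theorem isKing_iff (hf : IsOccurrence π σ f) : IsKing π ↔ IsKingOn σ (Set.range f) := by
  simp only [isKing_iff_isKingOn_univ, IsKingOn, Set.forall_mem_range, Set.exists_range_iff,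
    Set.mem_univ, forall_const, true_and, hf.splits_iff, hf.injective.ne_iff]

theorem contains_of_range_subset {τ : Perm (Fin l)} {g : Fin l → Fin n}
    (hf : IsOccurrence π σ f) (hg : IsOccurrence τ σ g) (h : Set.range f ⊆ Set.range g) :
    Contains π τ := by
  choose φ hφ using fun a => h (Set.mem_range_self a)
  refine contains_iff_exists_isOccurrence.mpr ⟨φ, fun a b => ?_, fun a b => ?_⟩
  · rw [← hg.lt_iff_lt, hφ, hφ, hf.lt_iff_lt]
  · rw [← hg.apply_lt_apply_iff, hφ, hφ, hf.apply_lt_apply_iff]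

end IsOccurrence

theorem exists_isOccurrence_range_eq (σ : Perm (Fin n)) (T : Finset (Fin n)) (hT : T.card = l) :
    ∃ (τ : Perm (Fin l)) (f : Fin l → Fin n), IsOccurrence τ σ f ∧ Set.range f = T := by
  let pos := T.orderIsoOfFin hT
  let val := (T.map σ.toEmbedding).orderIsoOfFin ((T.card_map _).trans hT)
  let restrict : T ≃ T.map σ.toEmbedding := σ.subtypeEquiv fun a => by simp
  refine ⟨(pos.toEquiv.trans restrict).trans val.symm.toEquiv, T.orderEmbOfFin hT,
    ⟨fun a b => OrderEmbedding.lt_iff_lt _, fun a b => ?_⟩, T.range_orderEmbOfFin hT⟩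
  exact (val.symm.lt_iff_lt (x := restrict (pos a)) (y := restrict (pos b))).symm

theorem exists_isKing_of_isKingOn (hf : IsOccurrence π σ f) {T : Finset (Fin n)}
    (hT : T.card = l) (hfT : Set.range f ⊆ T) (hking : IsKingOn σ T) :
    ∃ τ : Perm (Fin l), IsKing τ ∧ Contains π τ ∧ Contains τ σ := by
  obtain ⟨τ, g, hg, hgT⟩ := exists_isOccurrence_range_eq σ T hT
  exact ⟨τ, hg.isKing_iff.mpr (hgT ▸ hking), hf.contains_of_range_subset hg (hgT ▸ hfT),
    contains_iff_exists_isOccurrence.mpr ⟨g, hg⟩⟩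

theorem swap_lt_swap_iff_of_notMem_uIoo {α : Type*} [LinearOrder α] {j k x y : α}
    (hx : x ∉ Set.uIoo j k) (hy : y ∉ Set.uIoo j k) (hxk : x ≠ k) (hyk : y ≠ k) :
    swap j k x < swap j k y ↔ x < y := by
  simp only [mem_uIoo_iff] at hx hy
  simp only [swap_apply_def, hxk, hyk, if_false]
  grind

theorem IsOccurrence.swap_comp (hf : IsOccurrence π σ f) {j k : Fin n} (hk : k ∉ Set.range f)
    (h : ∀ a, ¬Splits σ (f a) j k) : IsOccurrence π σ (swap j k ∘ f) := by
  have hfk : ∀ a, f a ≠ k := fun a ha => hk ⟨a, ha⟩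
  have hσk : ∀ a, σ (f a) ≠ σ k := fun a => σ.injective.ne (hfk a)
  simp only [Splits, not_or] at h
  constructor <;> intro a b
  · rw [Function.comp, Function.comp,
      swap_lt_swap_iff_of_notMem_uIoo (h a).1 (h b).1 (hfk a) (hfk b), hf.lt_iff_lt]
  · rw [Function.comp, Function.comp, ← σ.injective.swap_apply, ← σ.injective.swap_apply,
      swap_lt_swap_iff_of_notMem_uIoo (h a).2 (h b).2 (hσk a) (hσk b), hf.apply_lt_apply_iff]

/-- Some occurrence of `π` in `σ` does not use position `i`; equivalently, `π` is still contained
in the permutation obtained from `σ` by deleting that entry. -/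
def Avoidable (π : Perm (Fin m)) (σ : Perm (Fin n)) (i : Fin n) : Prop :=
  ∃ f, IsOccurrence π σ f ∧ i ∉ Set.range f

theorem exists_avoidable (hc : Contains π σ) (hmn : m < n) : ∃ i, Avoidable π σ i := by
  obtain ⟨f, hf⟩ := contains_iff_exists_isOccurrence.mp hc
  have hsurj : ¬Function.Surjective f := fun h => by
    simpa [hmn.not_ge] using Fintype.card_le_of_surjective f h
  obtain ⟨i, hi⟩ := not_forall.mp hsurj
  exact ⟨i, f, hf, hi⟩

theorem IsOccurrence.avoidable_of_not_splits (hπ : IsKing π) (hf : IsOccurrence π σ f)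
    {j k : Fin n} (hjk : j ≠ k) (h : ∀ a, ¬Splits σ (f a) j k) : Avoidable π σ j := by
  by_cases hk : k ∈ Set.range f
  · obtain ⟨b, rfl⟩ := hk
    refine ⟨f, hf, ?_⟩
    rintro ⟨a, rfl⟩
    obtain ⟨c, hc⟩ := hπ.exists_splits (ne_of_apply_ne f hjk)
    exact h c (hf.splits_iff.mpr hc)
  · refine ⟨_, hf.swap_comp hk h, ?_⟩
    rintro ⟨a, ha⟩
    exact hk ⟨a, by rwa [Function.comp, swap_apply_eq_iff, swap_apply_left] at ha⟩

theorem Avoidable.exists_separates (hπ : IsKing π) (hσ : IsKing σ) {i : Fin n}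
    (hi : Avoidable π σ i) (hdel : ¬IsKingOn σ {i}ᶜ) :
    ∃ j k, Avoidable π σ j ∧ Avoidable π σ k ∧ Separates σ i j k := by
  obtain ⟨f, hf, hfi⟩ := hi
  unfold IsKingOn at hdel
  push Not at hdel
  obtain ⟨j, -, k, -, hjk, hns⟩ := hdel
  have hf_ns : ∀ a, ¬Splits σ (f a) j k := fun a => hns (f a) fun ha => hfi ⟨a, ha⟩
  exact ⟨j, k, hf.avoidable_of_not_splits hπ hjk hf_ns,
    hf.avoidable_of_not_splits hπ hjk.symm fun a hs => hf_ns a hs.symm,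
    hσ.separates_of_forall_not_splits hjk hns⟩

end Occurrences

section Intervals

variable {m n : ℕ} {π : Perm (Fin m)} {σ : Perm (Fin n)} {Q : Set (Fin n)}

/-- The positions in `Q` form an interval (or block) of `σ`: a set of consecutive positions carrying
consecutive values, encoded as the absence of outside entries splitting two entries of `Q`. -/
def IsInterval (σ : Perm (Fin n)) (Q : Set (Fin n)) : Prop :=
  ∀ i ∈ Q, ∀ j ∈ Q, ∀ c, Splits σ c i j → c ∈ Q

/-- No entry of the interval `Q` is extreme both in position and in value. -/
def HasNoCorner (σ : Perm (Fin n)) (Q : Set (Fin n)) : Prop :=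
  ∀ i ∈ Q, (∀ c, fdist i c = 1 → c ∈ Q) ∨ (∀ c, fdist (σ i) (σ c) = 1 → c ∈ Q)

theorem IsKingOn.inter {T : Set (Fin n)} (hT : IsKingOn σ T) (hQ : IsInterval σ Q) :
    IsKingOn σ (T ∩ Q) := by
  rintro i ⟨hiT, hiQ⟩ j ⟨hjT, hjQ⟩ hij
  obtain ⟨c, hcT, hc⟩ := hT i hiT j hjT hij
  exact ⟨c, ⟨hcT, hQ i hiQ j hjQ c hc⟩, hc⟩

theorem not_isKing_fin_two : ∀ τ : Perm (Fin 2), ¬IsKing τ := by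
  unfold IsKing fdist; decide

theorem not_isKing_fin_three : ∀ τ : Perm (Fin 3), ¬IsKing τ := by
  unfold IsKing fdist; decide

theorem IsKingOn.card_le_one {T : Finset (Fin n)} (hT : IsKingOn σ T) (h : T.card ≤ 3) :
    T.card ≤ 1 := by
  obtain ⟨τ, f, hf, hfT⟩ := exists_isOccurrence_range_eq σ T rfl
  have hτ : IsKing τ := hf.isKing_iff.mpr (hfT ▸ hT)
  generalize T.card = l at *
  interval_cases l
  · simp
  · simp
  · exact absurd hτ (not_isKing_fin_two τ)
  · exact absurd hτ (not_isKing_fin_three τ)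

theorem mem_uIoo_of_mem_uIoo {α : Type*} [LinearOrder α] {i j c q : α} (hc : c ∈ Set.uIoo i j)
    (hi : i ∉ Set.uIoo c q) (hj : j ∉ Set.uIoo c q) (hqi : q ≠ i) (hqj : q ≠ j) :
    q ∈ Set.uIoo i j := by
  rw [mem_uIoo_iff] at *
  grind

theorem IsInterval.splits_of_splits (hQ : IsInterval σ Q) {i j c q : Fin n} (hi : i ∉ Q)
    (hj : j ∉ Q) (hc : c ∈ Q) (hq : q ∈ Q) (h : Splits σ c i j) : Splits σ q i j := by
  have hqi : q ≠ i := ne_of_mem_of_not_mem hq hi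
  have hqj : q ≠ j := ne_of_mem_of_not_mem hq hj
  have hi' := mt (hQ c hc q hq i) hi
  have hj' := mt (hQ c hc q hq j) hj
  simp only [Splits, not_or] at hi' hj'
  exact h.imp (mem_uIoo_of_mem_uIoo · hi'.1 hj'.1 hqi hqj)
    (mem_uIoo_of_mem_uIoo · hi'.2 hj'.2 (σ.injective.ne hqi) (σ.injective.ne hqj))

theorem mem_or_mem_of_separates {x q j k : Fin n} (hx : x ∉ Q) (hq : q ∈ Q)
    (hxq : ∀ c ∉ Q, ¬Splits σ c q x) (hsep : Separates σ x j k) : j ∈ Q ∨ k ∈ Q := by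
  by_contra! h
  have hj := hxq j h.1
  have hk := hxq k h.2
  have hqx : q ≠ x := ne_of_mem_of_not_mem hq hx
  have hqj : q ≠ j := ne_of_mem_of_not_mem hq h.1
  have hqk : q ≠ k := ne_of_mem_of_not_mem hq h.2
  have hσx := σ.injective.ne hqx
  have hσj := σ.injective.ne hqj
  have hσk := σ.injective.ne hqk
  rw [splits_iff] at hj hk
  unfold Separates VSep HSep fdist at hsep
  have hjk : j ≠ k := by tauto
  have hσjk := σ.injective.ne hjk
  omega

theorem Separates.symm {i j k : Fin n} (h : Separates σ i j k) : Separates σ i k j := by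
  unfold Separates VSep HSep fdist at *
  omega

theorem Separates.splits {i j k : Fin n} (h : Separates σ i j k) : Splits σ i j k := by
  have hσ : j ≠ k → σ j ≠ σ k := σ.injective.ne
  unfold Separates VSep HSep fdist at h
  rw [splits_iff]
  omega

theorem HasNoCorner.not_separates (hQ : IsInterval σ Q) (hcor : HasNoCorner σ Q) {x j k : Fin n}
    (hx : x ∉ Q) (hj : j ∈ Q) : ¬Separates σ x j k := by
  intro hsep
  have hk : k ∉ Q := fun hk => hx (hQ j hj k hk x hsep.splits)
  have comm : ∀ a b : Fin n, fdist a b = fdist b a := fun a b => by unfold fdist; omega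
  rcases hsep with ⟨-, -, -, hxj, -, hσjk⟩ | ⟨-, -, -, hσxj, -, hjk⟩ <;>
    rcases hcor j hj with hpos | hval
  · exact hx (hpos x (comm j x ▸ hxj))
  · exact hk (hval k hσjk)
  · exact hk (hpos k hjk)
  · exact hx (hval x (comm (σ j) (σ x) ▸ hσxj))

theorem isKingOn_insert_compl (hσ : IsKing σ) (hQ : IsInterval σ Q) {q : Fin n} (hq : q ∈ Q)
    (h : ∀ x ∉ Q, ∃ c ∉ Q, Splits σ c q x) : IsKingOn σ (insert q Qᶜ) := by
  rintro i (rfl | hi) j (rfl | hj) hij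
  · exact absurd rfl hij
  · obtain ⟨c, hc, hs⟩ := h j hj
    exact ⟨c, Or.inr hc, hs⟩
  · obtain ⟨c, hc, hs⟩ := h i hi
    exact ⟨c, Or.inr hc, hs.symm⟩
  · obtain ⟨c, hs⟩ := hσ.exists_splits hij
    by_cases hc : c ∈ Q
    · exact ⟨q, Or.inl rfl, hQ.splits_of_splits hi hj hc hq hs⟩
    · exact ⟨c, Or.inr hc, hs⟩

theorem IsOccurrence.exists_range_subset_insert_compl {f : Fin m → Fin n} {Q : Finset (Fin n)}
    (hπ : IsKing π) (hf : IsOccurrence π σ f) (hQ : IsInterval σ Q) (hcard : Q.card = 4)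
    {i : Fin n} (hi : i ∈ Q) (hfi : i ∉ Set.range f) :
    ∃ q ∈ Q, Set.range f ⊆ insert q (Q : Set (Fin n))ᶜ := by
  classical
  let R : Finset (Fin n) := {a ∈ Q | a ∈ Set.range f}
  have hR_king : IsKingOn σ R := by
    have := (hf.isKing_iff.mp hπ).inter hQ
    rwa [show (R : Set (Fin n)) = Set.range f ∩ Q by ext; simp [R, and_comm]]
  have hR_lt : R.card < Q.card := Finset.card_lt_card (Finset.filter_ssubset.mpr ⟨i, hi, hfi⟩)
  have hR_card : R.card ≤ 1 := hR_king.card_le_one (by omega)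
  obtain ⟨q, hq, hRq⟩ : ∃ q ∈ Q, ∀ a ∈ R, a = q := by
    rcases R.eq_empty_or_nonempty with hR | ⟨q, hq⟩
    · exact ⟨i, hi, by simp [hR]⟩
    · exact ⟨q, (Finset.mem_filter.mp hq).1, fun a ha => Finset.card_le_one.mp hR_card a ha q hq⟩
  refine ⟨q, hq, fun a ha => or_iff_not_imp_right.mpr fun haQ => ?_⟩
  exact hRq a (Finset.mem_filter.mpr ⟨by simpa using haQ, ha⟩)

theorem exists_isKing_of_isInterval {Q : Finset (Fin n)} (hπ : IsKing π) (hσ : IsKing σ)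
    (hsep : ∀ i, Avoidable π σ i → ∃ j k, Separates σ i j k)
    (hQ : IsInterval σ Q) (hcor : HasNoCorner σ Q) (hcard : Q.card = 4)
    (havoid : ∃ i ∈ Q, Avoidable π σ i) :
    ∃ τ : Perm (Fin (n - 3)), IsKing τ ∧ Contains π τ ∧ Contains τ σ := by
  classical
  obtain ⟨i, hi, f, hf, hfi⟩ := havoid
  obtain ⟨q, hq, hfT⟩ := hf.exists_range_subset_insert_compl hπ hQ hcard hi hfi
  have hking : IsKingOn σ (insert q (Q : Set (Fin n))ᶜ) := by
    refine isKingOn_insert_compl hσ hQ hq fun x hx => ?_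
    by_contra! hns
    have hx_avoid : Avoidable π σ x := by
      refine hf.avoidable_of_not_splits hπ (ne_of_mem_of_not_mem hq hx).symm fun a hs => ?_
      rcases hfT ⟨a, rfl⟩ with ha | ha
      · simp [Splits, ha] at hs
      · exact hns (f a) ha hs.symm
    obtain ⟨j, k, hjk⟩ := hsep x hx_avoid
    rcases mem_or_mem_of_separates hx hq hns hjk with hj | hk
    · exact hcor.not_separates hQ hx hj hjk
    · exact hcor.not_separates hQ hx hk hjk.symm
  have hT_card : (insert q Qᶜ).card = n - 3 := by
    have hle := Q.card_le_univ
    rw [Finset.card_insert_of_notMem (by simpa using hq), Finset.card_compl, Fintype.card_fin,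
      hcard]
    rw [Fintype.card_fin] at hle
    omega
  exact exists_isKing_of_isKingOn hf hT_card (by simpa using hfT) (by simpa using hking)

end Intervals

section PointSets

/-- In the set of lattice points `B`, the point in column `x` vertically separates two points of
consecutive values `v` and `v + δ`, and its own value is at distance `d` from the nearer one. The
signs `ε` and `δ` account for reflections of this configuration. -/
def HasVGap (B : ℤ → ℤ → Prop) (x : ℤ) (d : ℕ) : Prop :=
  ∃ v ε δ, IsUnit ε ∧ IsUnit δ ∧ B x (v + δ * (d + 1)) ∧ B (x - ε) (v + δ) ∧ B (x + ε) v

/-- The set of lattice points `B` contains a translate of the diagram of `2413` or `3142`. -/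
def HasBlock (B : ℤ → ℤ → Prop) : Prop :=
  ∃ x v ε δ, IsUnit ε ∧ IsUnit δ ∧
    B (x - ε) (v + δ) ∧ B x (v + 3 * δ) ∧ B (x + ε) v ∧ B (x + 2 * ε) (v + 2 * δ)

/-- `B` is a set of lattice points of a quadrant, at most one in each row and column and no two
diagonally adjacent, each of which separates two others vertically or horizontally. -/
structure SelfSeparating (B : ℤ → ℤ → Prop) : Prop where
  nonneg : ∀ {x y}, B x y → 0 ≤ x ∧ 0 ≤ y
  eq_iff : ∀ {x y x' y'}, B x y → B x' y' → (x = x' ↔ y = y')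
  king : ∀ {x y x' y'}, B x y → B x' y' → (x - x').natAbs = 1 → (y - y').natAbs ≠ 1
  exists_gap : ∀ {x y}, B x y → (∃ d, HasVGap B x d) ∨ ∃ d, HasVGap (flip B) y d

variable {B : ℤ → ℤ → Prop}

theorem hasVGap_of_natAbs_sub_eq_one {x x₁ x₂ y y₁ y₂ : ℤ} (h : B x y) (h₁ : B x₁ y₁)
    (h₂ : B x₂ y₂) (hx₁ : (x - x₁).natAbs = 1) (hx₂ : (x - x₂).natAbs = 1) (hx : x₁ ≠ x₂)
    (hy : (y₁ - y₂).natAbs = 1) (hy₁ : y ≠ y₁) (hy₂ : y ≠ y₂) : ∃ d, HasVGap B x d := by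
  wlog hle : (y - y₁).natAbs ≤ (y - y₂).natAbs generalizing x₁ x₂ y₁ y₂
  · exact this h₂ h₁ hx₂ hx₁ hx.symm (by omega) hy₂ hy₁ (by omega)
  refine ⟨(y - y₁).natAbs, y₂, x - x₁, y₁ - y₂, Int.isUnit_iff_natAbs_eq.mpr hx₁,
    Int.isUnit_iff_natAbs_eq.mpr hy, ?_, ?_, ?_⟩
  · convert h using 1
    rcases Int.natAbs_eq_iff.mp hy with hδ | hδ <;> push_cast at hδ <;> rw [hδ] <;> omega
  · convert h₁ using 1 <;> ring
  · convert h₂ using 1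
    omega

theorem hasBlock_of_flip (h : HasBlock (flip B)) : HasBlock B := by
  obtain ⟨x, v, ε, δ, hε, hδ, hA, hP, hC, hD⟩ := h
  unfold flip at hA hP hC hD
  refine ⟨v + δ, x + 2 * ε, δ, -ε, hδ, hε.neg, ?_, ?_, ?_, ?_⟩
  · convert hC using 1 <;> ring
  · convert hA using 1
    ring
  · convert hD using 1
    ring
  · convert hP using 1 <;> ring

/-- `d` is a lower bound for the vertical and horizontal gaps of `B`. -/
def IsGapLowerBound (B : ℤ → ℤ → Prop) (d : ℕ) : Prop :=
  ∀ x e, HasVGap B x e ∨ HasVGap (flip B) x e → d ≤ e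

namespace SelfSeparating

theorem flip (hB : SelfSeparating B) : SelfSeparating (flip B) where
  nonneg h := (hB.nonneg h).symm
  eq_iff h h' := (hB.eq_iff h h').symm
  king h h' hx hy := hB.king h h' hy hx
  exists_gap h := (hB.exists_gap h).symm

theorem two_le_of_hasVGap (hB : SelfSeparating B) {x : ℤ} {d : ℕ} (h : HasVGap B x d) :
    2 ≤ d := by
  obtain ⟨v, ε, δ, hε, hδ, hP, hA, -⟩ := h
  have heq := hB.eq_iff hP hA
  have hking := hB.king hP hA
  by_contra! hd
  rw [Int.isUnit_iff] at hε hδ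
  interval_cases d <;> rcases hε with rfl | rfl <;> rcases hδ with rfl | rfl <;> omega

theorem apply_sub_two_of_isGapLowerBound (hB : SelfSeparating B) (hblock : ¬HasBlock B) {d : ℕ}
    (hmin : IsGapLowerBound B d) {x v ε δ : ℤ} (hd : 2 ≤ d) (hε : IsUnit ε) (hδ : IsUnit δ)
    (hP : B x (v + δ * (d + 1))) (hA : B (x - ε) (v + δ)) (hC : B (x + ε) v) :
    B (x - 2 * ε) (v + δ * (d + 2)) := by
  rcases hB.exists_gap hA with ⟨e, h⟩ | ⟨e, h⟩
  -- The other point next to column `x - ε` has value `v + δ * (d + 2)` or `v + δ * d`; the latter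
  -- would give a gap `d - 1`.
  · have hde := hmin _ e (Or.inl h)
    obtain ⟨v', ε', δ', hε', hδ', hA', hN, hF⟩ := h
    have hAA := hB.eq_iff hA hA'
    have hPN := hB.eq_iff hP hN
    have hPF := hB.eq_iff hP hF
    rw [Int.isUnit_iff] at hε hδ hε' hδ'
    obtain rfl | rfl : ε' = ε ∨ ε' = -ε := by omega
    · convert hN using 1
      · ring
      · rcases hδ with rfl | rfl <;> rcases hδ' with rfl | rfl <;> omega
    · convert hF using 1
      · ring
      · rcases hδ with rfl | rfl <;> rcases hδ' with rfl | rfl <;> omega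
  -- The point with value `v + 2 * δ` must lie in column `x + 2 * ε`, which makes the gap `2`.
  · have hde := hmin _ e (Or.inr h)
    obtain ⟨v', ε', δ', hε', hδ', (hA' : B _ _), (hN : B _ _), (hF : B _ _)⟩ := h
    have hAA := hB.eq_iff hA hA'
    have hCN := hB.eq_iff hC hN
    have hCF := hB.eq_iff hC hF
    have hPN := hB.eq_iff hP hN
    have hPF := hB.eq_iff hP hF
    rw [Int.isUnit_iff] at hε hδ hε' hδ'
    obtain rfl | rfl : ε' = δ ∨ ε' = -δ := by omega
    · have hd : d = 2 := by
        rcases hε with rfl | rfl <;> rcases hδ with rfl | rfl <;> rcases hδ' with rfl | rfl <;>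
          omega
      subst hd
      refine absurd ⟨x, v, ε, ε', Int.isUnit_iff.mpr hε, Int.isUnit_iff.mpr hδ, hA, ?_, hC, ?_⟩
        hblock
      · convert hP using 1
        push_cast
        ring
      · convert hF using 1 <;> omega
    · rcases hε with rfl | rfl <;> rcases hδ with rfl | rfl <;> rcases hδ' with rfl | rfl <;> omega

theorem apply_add_two_of_apply_sub_two (hB : SelfSeparating B) {d : ℕ} {x v ε δ : ℤ} (hd : 2 ≤ d)
    (hε : IsUnit ε) (hδ : IsUnit δ) (hP : B x (v + δ * (d + 1)))
    (hA : B (x - ε) (v + δ)) (hC : B (x + ε) v) (hQ : B (x - 2 * ε) (v + δ * (d + 2))) :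
    B (x + 2 * ε) (v + δ * d) := by
  -- All other candidates for a point separated by `(x + ε, v)` share a row or a column with one of
  -- the points in columns `x - 2 * ε`, `x - ε` and `x`.
  rcases hB.exists_gap hC with ⟨e, h⟩ | ⟨e, h⟩
  · obtain ⟨v', ε', δ', hε', hδ', hC', hN, hF⟩ := h
    have hCC := hB.eq_iff hC hC'
    have hPN := hB.eq_iff hP hN
    have hPF := hB.eq_iff hP hF
    have hQN := hB.eq_iff hQ hN
    have hQF := hB.eq_iff hQ hF
    rw [Int.isUnit_iff] at hε hδ hε' hδ'
    obtain rfl | rfl : ε' = ε ∨ ε' = -ε := by omega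
    · convert hF using 1
      · ring
      · rcases hδ with rfl | rfl <;> rcases hδ' with rfl | rfl <;> omega
    · convert hN using 1
      · ring
      · rcases hδ with rfl | rfl <;> rcases hδ' with rfl | rfl <;> omega
  · obtain ⟨v', ε', δ', hε', hδ', hC', hN, hF⟩ := h
    have hAN := hB.eq_iff hA hN
    have hAF := hB.eq_iff hA hF
    have hPN := hB.eq_iff hP hN
    have hPF := hB.eq_iff hP hF
    have hQN := hB.eq_iff hQ hN
    have hQF := hB.eq_iff hQ hF
    rw [Int.isUnit_iff] at hε hδ hε' hδ'
    rcases hε with rfl | rfl <;> rcases hδ with rfl | rfl <;> rcases hδ' with rfl | rfl <;>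
      rcases hε' with rfl | rfl <;> omega

theorem hasVGap_sub_one (hB : SelfSeparating B) (hblock : ¬HasBlock B) {d : ℕ}
    (hmin : IsGapLowerBound B d) {x : ℤ} (h : HasVGap B x d) : HasVGap B (x - 1) d := by
  have hd := hB.two_le_of_hasVGap h
  obtain ⟨v, ε, δ, hε, hδ, hP, hA, hC⟩ := h
  have hQ := hB.apply_sub_two_of_isGapLowerBound hblock hmin hd hε hδ hP hA hC
  have hR := hB.apply_add_two_of_apply_sub_two hd hε hδ hP hA hC hQ
  rcases Int.isUnit_iff.mp hε with rfl | rfl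
  · refine ⟨v + δ * (d + 2), -1, -δ, isUnit_one.neg, hδ.neg, ?_, ?_, ?_⟩
    · convert hA using 1
      ring
    · convert hP using 1 <;> ring
    · convert hQ using 1
      ring
  · refine ⟨v + δ * (d + 1), 1, -δ, isUnit_one, hδ.neg, ?_, ?_, ?_⟩
    · convert hC using 1 <;> ring
    · convert hR using 1 <;> ring
    · convert hP using 1
      ring

theorem hasBlock_of_isGapLowerBound (hB : SelfSeparating B) {d : ℕ} (hmin : IsGapLowerBound B d)
    {x : ℤ} (h : HasVGap B x d) : HasBlock B := by
  by_contra hblock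
  have hleft : ∀ k : ℕ, HasVGap B (x - k) d := by
    intro k
    induction k with
    | zero => simpa using h
    | succ k ih => simpa [sub_sub] using hB.hasVGap_sub_one hblock hmin ih
  obtain ⟨v, ε, δ, -, -, hP, -⟩ := hleft (x.toNat + 1)
  have := (hB.nonneg hP).1
  omega

theorem hasBlock (hB : SelfSeparating B) {x y : ℤ} (h : B x y) : HasBlock B := by
  classical
  have hex : ∃ d x, HasVGap B x d ∨ HasVGap (_root_.flip B) x d := by
    rcases hB.exists_gap h with ⟨d, hd⟩ | ⟨d, hd⟩
    · exact ⟨d, x, Or.inl hd⟩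
    · exact ⟨d, y, Or.inr hd⟩
  have hmin : IsGapLowerBound B (Nat.find hex) := fun x e he => Nat.find_min' hex ⟨x, he⟩
  obtain ⟨x, hx | hx⟩ := Nat.find_spec hex
  · exact hB.hasBlock_of_isGapLowerBound hmin hx
  · exact hasBlock_of_flip (hB.flip.hasBlock_of_isGapLowerBound (fun x e he => hmin x e he.symm) hx)

end SelfSeparating

end PointSets

section Entries

variable {n : ℕ} {σ : Perm (Fin n)} {S : Set (Fin n)}

/-- The lattice points `(i, σ i)` with `i ∈ S`, as a relation between integers. -/
def EntryAt (σ : Perm (Fin n)) (S : Set (Fin n)) (x y : ℤ) : Prop :=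
  ∃ i ∈ S, (i : ℤ) = x ∧ (σ i : ℤ) = y

theorem IsKing.selfSeparating_entryAt (hσ : IsKing σ)
    (hS : ∀ i ∈ S, ∃ j ∈ S, ∃ k ∈ S, Separates σ i j k) : SelfSeparating (EntryAt σ S) where
  nonneg := by
    rintro _ _ ⟨i, -, rfl, rfl⟩
    omega
  eq_iff := by
    rintro _ _ _ _ ⟨i, -, rfl, rfl⟩ ⟨j, -, rfl, rfl⟩
    simp [Fin.val_inj]
  king := by
    rintro _ _ _ _ ⟨i, -, rfl, rfl⟩ ⟨j, -, rfl, rfl⟩ hij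
    exact hσ.fdist_apply_ne_one hij
  exists_gap := by
    have val_ne {a b : Fin n} (h : a ≠ b) : (a : ℤ) ≠ b := by omega
    have apply_ne {a b : Fin n} (h : a ≠ b) : (σ a : ℤ) ≠ σ b := val_ne (σ.injective.ne h)
    rintro _ _ ⟨i, hi, rfl, rfl⟩
    obtain ⟨j, hj, k, hk, hsep⟩ := hS i hi
    have entry {a : Fin n} (ha : a ∈ S) : EntryAt σ S a (σ a) := ⟨a, ha, rfl, rfl⟩
    rcases hsep with ⟨hij, hik, hjk, hj₁, hk₁, hd⟩ | ⟨hij, hik, hjk, hj₁, hk₁, hd⟩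
    · exact Or.inl (hasVGap_of_natAbs_sub_eq_one (entry hi) (entry hj) (entry hk) hj₁ hk₁
        (val_ne hjk) hd (apply_ne hij) (apply_ne hik))
    · exact Or.inr (hasVGap_of_natAbs_sub_eq_one (B := flip (EntryAt σ S)) (entry hi) (entry hj)
        (entry hk) hj₁ hk₁ (apply_ne hjk) hd (val_ne hij) (val_ne hik))

theorem isInterval_of_forall_mem_iff {Q : Set (Fin n)} {q q' w w' : ℤ}
    (hpos : ∀ i, i ∈ Q ↔ q ≤ i ∧ i ≤ q') (hval : ∀ i, i ∈ Q ↔ w ≤ σ i ∧ σ i ≤ w') :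
    IsInterval σ Q := by
  intro i hi j hj b hb
  rcases splits_iff.mp hb with hb | hb
  · rw [hpos] at hi hj ⊢
    omega
  · rw [hval] at hi hj ⊢
    omega

theorem exists_forall_eq_or_iff_mem_window {ε : ℤ} (hε : IsUnit ε) (x : ℤ) :
    ∃ q : ℤ, (q < x ∧ x < q + 3) ∧ (q < x + ε ∧ x + ε < q + 3) ∧
      ∀ i, (i = x - ε ∨ i = x ∨ i = x + ε ∨ i = x + 2 * ε) ↔ q ≤ i ∧ i ≤ q + 3 := by
  rcases Int.isUnit_iff.mp hε with rfl | rfl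
  · exact ⟨x - 1, by omega, by omega, by omega⟩
  · exact ⟨x - 2, by omega, by omega, by omega⟩

theorem exists_isInterval_of_hasBlock (h : HasBlock (EntryAt σ S)) :
    ∃ Q : Finset (Fin n), IsInterval σ Q ∧ HasNoCorner σ Q ∧ Q.card = 4 ∧ ∃ i ∈ Q, i ∈ S := by
  obtain ⟨x, v, ε, δ, hε, hδ, ⟨a, ha, hax, hay⟩, ⟨p, -, hpx, hpy⟩, ⟨c, -, hcx, hcy⟩,
    ⟨d, -, hdx, hdy⟩⟩ := h
  obtain ⟨q, hqp, hqc, hq⟩ := exists_forall_eq_or_iff_mem_window hε x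
  obtain ⟨w, hwa, hwd, hw⟩ := exists_forall_eq_or_iff_mem_window hδ (v + δ)
  have hpos : ∀ i, i ∈ ({a, p, c, d} : Finset (Fin n)) ↔ q ≤ i ∧ i ≤ q + 3 := by
    intro i
    simp only [← hq, Finset.mem_insert, Finset.mem_singleton, Fin.ext_iff]
    omega
  have hval : ∀ i, i ∈ ({a, p, c, d} : Finset (Fin n)) ↔ w ≤ σ i ∧ σ i ≤ w + 3 := by
    intro i
    simp only [← hw, Finset.mem_insert, Finset.mem_singleton, ← σ.injective.eq_iff (a := i),
      Fin.ext_iff]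
    omega
  refine ⟨{a, p, c, d}, isInterval_of_forall_mem_iff hpos hval, ?_, ?_, a, by simp, ha⟩
  · intro i hi
    have hcases : (q < i ∧ i < q + 3) ∨ (w < σ i ∧ σ i < w + 3) := by
      simp only [Finset.coe_insert, Finset.coe_singleton, Set.mem_insert_iff,
        Set.mem_singleton_iff] at hi
      rcases hi with rfl | rfl | rfl | rfl <;> omega
    refine hcases.imp (fun hi b hb => (hpos b).mpr ?_) fun hi b hb => (hval b).mpr ?_ <;>
      unfold fdist at hb <;> omega
  · rw [Int.isUnit_iff] at hε
    have hne : a ≠ p ∧ a ≠ c ∧ a ≠ d ∧ p ≠ c ∧ p ≠ d ∧ c ≠ d := by omega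
    simp [hne]

end Entries

section Chains

variable {m n : ℕ} {π : Perm (Fin m)} {σ : Perm (Fin n)}

theorem exists_isKing_between (hπ : IsKing π) (hσ : IsKing σ) (hc : Contains π σ) (hmn : m < n) :
    ∃ (l : ℕ) (τ : Perm (Fin l)), (n = l + 1 ∨ n = l + 3) ∧
      IsKing τ ∧ Contains π τ ∧ Contains τ σ := by
  by_cases hdel : ∃ i, Avoidable π σ i ∧ IsKingOn σ {i}ᶜ
  · obtain ⟨i, ⟨f, hf, hfi⟩, hking⟩ := hdel
    have hcard : ({i}ᶜ : Finset (Fin n)).card = n - 1 := by simp [Finset.card_compl]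
    obtain ⟨τ, hτ⟩ := exists_isKing_of_isKingOn hf hcard (by simpa using hfi) (by simpa using hking)
    exact ⟨n - 1, τ, Or.inl (by omega), hτ⟩
  · push Not at hdel
    have hsep : ∀ i, Avoidable π σ i →
        ∃ j, Avoidable π σ j ∧ ∃ k, Avoidable π σ k ∧ Separates σ i j k := fun i hi => by
      obtain ⟨j, k, hj, hk, h⟩ := hi.exists_separates hπ hσ (hdel i hi)
      exact ⟨j, hj, k, hk, h⟩
    obtain ⟨i, hi⟩ := exists_avoidable hc hmn
    have hblock := (hσ.selfSeparating_entryAt (S := {i | Avoidable π σ i}) hsep).hasBlock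
      ⟨i, hi, rfl, rfl⟩
    obtain ⟨Q, hQ, hcor, hcard, hQ_avoid⟩ := exists_isInterval_of_hasBlock hblock
    obtain ⟨τ, hτ⟩ := exists_isKing_of_isInterval hπ hσ
      (fun i hi => (hsep i hi).imp fun _ hj => hj.2.imp fun _ hk => hk.2) hQ hcor hcard hQ_avoid
    have := hcard ▸ Q.card_le_univ
    rw [Fintype.card_fin] at this
    exact ⟨n - 3, τ, Or.inr (by omega), hτ⟩

theorem le_of_contains (h : Contains π σ) : m ≤ n := by
  obtain ⟨f, -⟩ := h
  simpa using Fintype.card_le_of_embedding f.toEmbedding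

theorem eq_of_contains {π σ : Perm (Fin n)} (h : Contains π σ) : π = σ := by
  obtain ⟨f, hf⟩ := h
  have hmono : StrictMono (σ ∘ π.symm) := fun a b hab => by
    simpa [f.strictMono.apply_eq, hab] using hf (π.symm a) (π.symm b)
  ext a
  simpa using congrArg Fin.val (hmono.apply_eq (x := π a)).symm

/-- The king permutations of all lengths. -/
abbrev King : Type :=
  {s : Σ l, Perm (Fin l) // IsKing s.2}

/-- The steps allowed in a chain of king permutations: strict containment, with lengths differing
by `1` or `3`. -/
def kingStep : SetRel King King :=
  {p | StrictContains p.1.1.2 p.2.1.2 ∧ (p.2.1.1 = p.1.1.1 + 1 ∨ p.2.1.1 = p.1.1.1 + 3)}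

theorem exists_relSeries_kingStep (hπ : IsKing π) (hσ : IsKing σ) (hc : Contains π σ) :
    ∃ s : RelSeries kingStep, s.head = ⟨⟨m, π⟩, hπ⟩ ∧ s.last = ⟨⟨n, σ⟩, hσ⟩ := by
  induction n using Nat.strong_induction_on with
  | _ n ih =>
    rcases (le_of_contains hc).eq_or_lt with rfl | hmn
    · obtain rfl := eq_of_contains hc
      exact ⟨.singleton _ _, rfl, rfl⟩
    · obtain ⟨l, τ, hl, hτ, hπτ, hτσ⟩ := exists_isKing_between hπ hσ hc hmn
      have hln : l < n := by omega
      obtain ⟨s, hs_head, hs_last⟩ := ih l hln hτ hπτ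
      have hstep : (s.last, (⟨⟨n, σ⟩, hσ⟩ : King)) ∈ kingStep := by
        rw [hs_last]
        exact ⟨⟨hτσ, hln⟩, hl⟩
      exact ⟨s.snoc _ hstep, by simpa using hs_head, by simp⟩

end Chains

/-- between any two kings `π ≺ σ` there is a chain of kings with
consecutive length differences in `{1, 3}`. -/
theorem chain_of_kings (m n : ℕ) (π : Equiv.Perm (Fin m)) (σ : Equiv.Perm (Fin n))
    (hπ : IsKing π) (hσ : IsKing σ) (hπσ : StrictContains π σ) :
    ∃ (k : ℕ) (c : Fin (k + 1) → Σ l : ℕ, Equiv.Perm (Fin l)),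
      c 0 = ⟨m, π⟩ ∧ c (Fin.last k) = ⟨n, σ⟩ ∧
      (∀ i : Fin (k + 1), IsKing (c i).2) ∧
      (∀ i : Fin k, StrictContains (c i.castSucc).2 (c i.succ).2 ∧
        ((c i.succ).1 = (c i.castSucc).1 + 1 ∨ (c i.succ).1 = (c i.castSucc).1 + 3)) := by
  obtain ⟨s, hs_head, hs_last⟩ := exists_relSeries_kingStep hπ hσ hπσ.1
  exact ⟨s.length, fun i => (s i).1, congrArg Subtype.val hs_head, congrArg Subtype.val hs_last,
    fun i => (s i).2, s.step⟩
end
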